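/- arXiv:1105.5105 — 2 statements merged into one kernel-verified Lean document; each statement's English description precedes it below -/
import Mathlib

section
/- For the random walk in an i.i.d. random environment on Z^d (d ≥ 2): (i) if θ_+ = 1 then P(sup_{n≥1} |X_n| < ∞) = 0, i.e. the walk visits infinitely many sites P-almost surely; (ii) if θ_+ < 1 then P(sup_{n≥1} |X_n| < ∞) = 1, i.e. the walk gets stuck on a finite set of points P-almost surely. -/
/-!
The forward cluster of a site is finite exactly when the site lies in a finite set `B` that is
*closed*, meaning that no edge of `G(ω)` leaves `B`. Whether `B` is closed depends only on the
environment inside `B`, and its probability is invariant under translation of `B`. Hence `θ₊ = 1`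
says that almost surely no nonempty finite set is closed, and `θ₊ < 1` says that some finite set
containing the origin is closed with positive probability.

(i) Fix an environment without nonempty finite closed sets and a finite set `A`. The quenched
probability of staying in `A` for `j` steps decreases in `j` to a function that is harmonic for the
walk killed outside `A`. If its maximum were positive, the set where the maximum is attained would
be closed; so the limit is `0` (`stayProb_tendsto_zero`). By the Markov property and dominated
convergence the walk stays in `A` forever with annealed probability `0` (`IsRWRE.stay_null`), and
there are countably many choices of `A`.

(ii) Let `B` be closed with positive probability and let `ℓ` be a coordinate or its negative. When
the walk first enters a half-space `{N ≤ ℓ}`, say at `x`, the environment in that half-space is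
fresh. Translate `B` so that its `ℓ`-lowest site becomes `x`; this translate lies in the half-space,
so it is closed with a conditional probability that does not depend on the past
(`IsRWRE.cylinder_indep`), in which case the walk never leaves it. With `c < 1` the probability that
`B` is not closed, this gives `P(sup ℓ(X_n) = ∞) ≤ c * P(sup ℓ(X_n) ≥ N)` for every `N`, and letting
`N → ∞` shows that `sup ℓ(X_n) < ∞` almost surely (`IsRWRE.bounded_direction`). Applied to all
coordinates and their negatives, this bounds the range.
-/

open MeasureTheory Filter Set Topology
open scoped Classical ENNReal

noncomputable section

/-- Lattice sites of `ℤ^d`. -/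
abbrev Site (d : ℕ) := Fin d → ℤ

/-- The `2d` unit vectors `±e_i` of `ℤ^d`, indexed by `Fin d × Bool`
(`true` for `+e_i`, `false` for `-e_i`). -/
def stepVec (d : ℕ) (i : Fin d × Bool) : Site d :=
  if i.2 = true then Pi.single i.1 1 else -Pi.single i.1 1

/-- An element of `𝒫`: a probability measure on the set `E` of unit vectors of `ℤ^d`,
recorded via its probability mass function on lattice vectors. -/
structure EnvDist (d : ℕ) where
  prob : Site d → ℝ
  nonneg : ∀ v, 0 ≤ prob v
  support : ∀ v, prob v ≠ 0 → ∃ i, v = stepVec d i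
  total : ∑ i : Fin d × Bool, prob (stepVec d i) = 1

instance {d : ℕ} : MeasurableSpace (EnvDist d) :=
  MeasurableSpace.comap EnvDist.prob inferInstance

/-- Environments: an element of `𝒫` at every site. -/
abbrev EnvOmega (d : ℕ) := Site d → EnvDist d

/-- Path space for the walk. -/
abbrev PathSpace (d : ℕ) := ℕ → Site d

/-- Sample space for the annealed walk: environment together with path. -/
abbrev RWSpace (d : ℕ) := EnvOmega d × PathSpace d

/-- Dot product of a lattice vector with a real vector. -/
def dotR {d : ℕ} (x : Site d) (l : Fin d → ℝ) : ℝ := ∑ i, (x i : ℝ) * l i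

/-- Dot product of two lattice vectors. -/
def dotZ {d : ℕ} (x y : Site d) : ℤ := ∑ i, x i * y i

/-- Quenched probability that the walk follows the steps of `x` for its first `n` steps. -/
def pathWeight {d : ℕ} (ω : EnvOmega d) (n : ℕ) (x : ℕ → Site d) : ℝ :=
  ∏ k ∈ Finset.range n, (ω (x k)).prob (x (k + 1) - x k)

/-- `ν` is the product measure `μ^{⊗ℤ^d}`, i.e. the coordinates are i.i.d. with law `μ`. -/
def IsIIDEnv {d : ℕ} (μ : Measure (EnvDist d)) (ν : Measure (EnvOmega d)) : Prop :=
  IsProbabilityMeasure μ ∧ IsProbabilityMeasure ν ∧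
    ∀ (s : Finset (Site d)) (A : Site d → Set (EnvDist d)),
      (∀ x ∈ s, MeasurableSet (A x)) →
      ν {ω | ∀ x ∈ s, ω x ∈ A x} = ∏ x ∈ s, μ (A x)

/-- `P` is the annealed law of the RWRE started at the origin in an i.i.d. environment
with marginal `μ`: the environment marginal is the i.i.d. product, and the cylinder
probabilities are given by averaging the quenched Markov-chain probabilities. -/
def IsRWRE {d : ℕ} (μ : Measure (EnvDist d)) (P : Measure (RWSpace d)) : Prop :=
  IsProbabilityMeasure P ∧ IsIIDEnv μ (P.map Prod.fst) ∧
    ∀ (n : ℕ) (x : ℕ → Site d) (A : Set (EnvOmega d)), MeasurableSet A →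
      (P {q | q.1 ∈ A ∧ ∀ k ≤ n, q.2 k = x k}).toReal =
        (if x 0 = 0 then (1 : ℝ) else 0) * ∫ ω in A, pathWeight ω n x ∂(P.map Prod.fst)

/-- `Q` is the quenched law `ℙ_ω` of the walk in the fixed environment `ω`, started at the
origin. -/
def IsQuenchedRW {d : ℕ} (ω : EnvOmega d) (Q : Measure (PathSpace d)) : Prop :=
  IsProbabilityMeasure Q ∧
    ∀ (n : ℕ) (x : ℕ → Site d),
      (Q {w | ∀ k ≤ n, w k = x k}).toReal =
        (if x 0 = 0 then (1 : ℝ) else 0) * pathWeight ω n x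

/-- `x → y`: there is a directed path from `x` to `y` in the graph `G(ω)`. -/
def Reaches {d : ℕ} (ω : EnvOmega d) : Site d → Site d → Prop :=
  Relation.ReflTransGen (fun a b => 0 < (ω a).prob (b - a))

/-- The forward cluster `C_x`. -/
def clusterC {d : ℕ} (ω : EnvOmega d) (x : Site d) : Set (Site d) := {y | Reaches ω x y}

/-- The mutually connected cluster `M_x = C_x ∩ B_x`. -/
def clusterM {d : ℕ} (ω : EnvOmega d) (x : Site d) : Set (Site d) :=
  {y | Reaches ω x y ∧ Reaches ω y x}

/-- The local drift `u = ∑_e γ(e) e` of an environment value `γ`. -/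
def drift {d : ℕ} (γ : EnvDist d) : Fin d → ℝ :=
  fun i => ∑ k : Fin d × Bool, γ.prob (stepVec d k) * ((stepVec d k i : ℤ) : ℝ)

/-- `N_n`: the number of times before time `n` at which the walk sits on a site whose
environment equals `γ`. -/
def envCount {d : ℕ} (γ : EnvDist d) (q : RWSpace d) (n : ℕ) : ℕ :=
  Set.ncard {m : ℕ | m < n ∧ q.1 (q.2 m) = γ}

end

/-! ### Closed sets of sites and elementary bounds -/

/-- The set `B` is closed in `G(ω)`: no edge of the graph leaves it. -/
def ClosedIn {d : ℕ} (ω : EnvOmega d) (B : Finset (Site d)) : Prop :=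
  ∀ y ∈ B, ∀ z, z ∉ B → ¬ 0 < (ω y).prob (z - y)

lemma measurable_prob {d : ℕ} (y v : Site d) :
    Measurable fun ω : EnvOmega d => (ω y).prob v := by
  have h : Measurable (EnvDist.prob : EnvDist d → Site d → ℝ) := comap_measurable _
  exact (measurable_pi_apply v).comp (h.comp (measurable_pi_apply y))

lemma sum_prob_le_one {d : ℕ} (γ : EnvDist d) (W : Finset (Site d)) :
    ∑ v ∈ W, γ.prob v ≤ 1 := by
  have h1 : ∑ v ∈ W, γ.prob v ≤ ∑ v ∈ Finset.univ.image (stepVec d), γ.prob v := by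
    rw [← Finset.sum_filter_ne_zero]
    refine Finset.sum_le_sum_of_subset_of_nonneg ?_ fun v _ _ => γ.nonneg v
    intro v hv
    obtain ⟨i, hi⟩ := γ.support v (Finset.mem_filter.1 hv).2
    exact Finset.mem_image.2 ⟨i, Finset.mem_univ _, hi.symm⟩
  have h2 : ∑ v ∈ Finset.univ.image (stepVec d), γ.prob v
      ≤ ∑ i : Fin d × Bool, γ.prob (stepVec d i) := by
    apply Finset.sum_image_le_of_nonneg
    intro i _
    exact γ.nonneg _
  linarith [γ.total]

lemma prob_le_one' {d : ℕ} (γ : EnvDist d) (v : Site d) : γ.prob v ≤ 1 := by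
  simpa using sum_prob_le_one γ {v}

lemma sum_step_le_one {d : ℕ} (γ : EnvDist d) (x : Site d) (W : Finset (Site d)) :
    ∑ y ∈ W, γ.prob (y - x) ≤ 1 := by
  have := sum_prob_le_one γ (W.image (· - x))
  rwa [Finset.sum_image (by intro a _ b _ h; simpa using h)] at this

lemma pathWeight_nonneg {d : ℕ} (ω : EnvOmega d) (n : ℕ) (x : ℕ → Site d) :
    0 ≤ pathWeight ω n x := Finset.prod_nonneg fun _ _ => (ω _).nonneg _

lemma pathWeight_le_one {d : ℕ} (ω : EnvOmega d) (n : ℕ) (x : ℕ → Site d) :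
    pathWeight ω n x ≤ 1 :=
  Finset.prod_le_one (fun _ _ => (ω _).nonneg _) fun _ _ => prob_le_one' _ _

lemma measurable_pathWeight {d : ℕ} (n : ℕ) (x : ℕ → Site d) :
    Measurable fun ω : EnvOmega d => pathWeight ω n x :=
  Finset.measurable_prod _ fun _ _ => measurable_prob _ _

lemma measurableSet_closedIn {d : ℕ} (B : Finset (Site d)) :
    MeasurableSet {ω : EnvOmega d | ClosedIn ω B} := by
  have : {ω : EnvOmega d | ClosedIn ω B} =
      ⋂ y ∈ B, ⋂ z : Site d, ⋂ _ : z ∉ B, {ω | ¬ 0 < (ω y).prob (z - y)} := by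
    ext ω; simp [ClosedIn]
  rw [this]
  refine Finset.measurableSet_biInter _ fun y _ => MeasurableSet.iInter fun z =>
    MeasurableSet.iInter fun _ => ?_
  exact (measurableSet_lt measurable_const (measurable_prob y (z - y))).compl

lemma ClosedIn.reaches {d : ℕ} {ω : EnvOmega d} {B : Finset (Site d)} (h : ClosedIn ω B)
    {x y : Site d} (hx : x ∈ B) (hxy : Reaches ω x y) : y ∈ B := by
  induction hxy with
  | refl => exact hx
  | tail _ hbc ih => by_contra hc; exact h _ ih _ hc hbc

/-- A forward cluster is finite exactly when some finite closed set contains its root: the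
cluster itself is such a set. -/
lemma cluster_finite_iff {d : ℕ} (ω : EnvOmega d) (x : Site d) :
    (clusterC ω x).Finite ↔ ∃ B : Finset (Site d), x ∈ B ∧ ClosedIn ω B := by
  constructor
  · intro h
    refine ⟨h.toFinset, ?_, ?_⟩
    · exact h.mem_toFinset.2 Relation.ReflTransGen.refl
    · intro y hy z hz hp
      exact hz (h.mem_toFinset.2 (Relation.ReflTransGen.tail (h.mem_toFinset.1 hy) hp))
  · rintro ⟨B, hx, hB⟩
    exact B.finite_toSet.subset fun y hy => hB.reaches hx hy

/-! ### Translation invariance and independence of the environment -/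

/-- The environment seen from the site `a`. -/
def shiftEnv {d : ℕ} (a : Site d) (ω : EnvOmega d) : EnvOmega d := fun y => ω (y + a)

lemma measurable_shiftEnv {d : ℕ} (a : Site d) : Measurable (shiftEnv (d := d) a) :=
  measurable_pi_lambda _ fun _ => measurable_pi_apply _

lemma closedIn_shiftEnv {d : ℕ} (a : Site d) (ω : EnvOmega d) (B : Finset (Site d)) :
    ClosedIn (shiftEnv a ω) B ↔ ClosedIn ω (B.image (· + a)) := by
  constructor
  · intro h y hy z hz
    obtain ⟨y, hy', rfl⟩ := Finset.mem_image.1 hy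
    have := h y hy' (z - a) (fun hz' => hz (Finset.mem_image.2 ⟨_, hz', by simp⟩))
    simpa [shiftEnv, sub_sub, add_comm] using this
  · intro h y hy z hz
    have := h (y + a) (Finset.mem_image_of_mem _ hy) (z + a) (by
      intro hc
      obtain ⟨w, hw, hwz⟩ := Finset.mem_image.1 hc
      exact hz (by rwa [← add_right_cancel hwz]))
    simpa [shiftEnv] using this

lemma IsIIDEnv.eq_infinitePi {d : ℕ} {μ : Measure (EnvDist d)} {ν : Measure (EnvOmega d)}
    (h : IsIIDEnv μ ν) :
    have := h.1
    ν = Measure.infinitePi fun _ : Site d => μ := by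
  have := h.1
  refine Measure.eq_infinitePi _ fun s t ht => ?_
  rw [← h.2.2 s t fun x _ => ht x]
  rfl

lemma IsIIDEnv.shift {d : ℕ} {μ : Measure (EnvDist d)} {ν : Measure (EnvOmega d)}
    (h : IsIIDEnv μ ν) (a : Site d) : ν.map (shiftEnv a) = ν := by
  have := h.1
  rw [h.eq_infinitePi]
  refine Measure.eq_infinitePi _ fun s t ht => ?_
  rw [Measure.map_apply (measurable_shiftEnv a)
    (MeasurableSet.pi s.countable_toSet fun i _ => ht i), ← h.eq_infinitePi]
  have := h.2.2 (s.image (· + a)) (fun y => t (y - a)) fun x _ => ht _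
  rw [Finset.prod_image (by intro a _ b _ h; simpa using h)] at this
  simp only [add_sub_cancel_right] at this
  rw [← this]
  congr 1
  ext ω
  simp only [Set.mem_preimage, Set.mem_pi, Finset.mem_coe, mem_ofPred_eq, Finset.forall_mem_image,
    shiftEnv, add_sub_cancel_right]

lemma IsIIDEnv.closedIn_translate {d : ℕ} {μ : Measure (EnvDist d)} {ν : Measure (EnvOmega d)}
    (h : IsIIDEnv μ ν) (a : Site d) (B : Finset (Site d)) :
    ν {ω | ClosedIn ω (B.image (· + a))} = ν {ω | ClosedIn ω B} := by
  conv_rhs => rw [← h.shift a, Measure.map_apply (measurable_shiftEnv a)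
    (measurableSet_closedIn B)]
  congr 1
  ext ω
  exact (closedIn_shiftEnv a ω B).symm

/-- Random variables that read disjoint finite sets of sites are uncorrelated. -/
lemma IsIIDEnv.integral_mul {d : ℕ} {μ : Measure (EnvDist d)} {ν : Measure (EnvOmega d)}
    (h : IsIIDEnv μ ν) {S T : Finset (Site d)} (hST : Disjoint S T) {f g : EnvOmega d → ℝ}
    (hf : Measurable f) (hg : Measurable g)
    (hfS : ∀ ω ω' : EnvOmega d, (∀ x ∈ S, ω x = ω' x) → f ω = f ω')
    (hgT : ∀ ω ω' : EnvOmega d, (∀ x ∈ T, ω x = ω' x) → g ω = g ω') :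
    ∫ ω, f ω * g ω ∂ν = (∫ ω, f ω ∂ν) * ∫ ω, g ω ∂ν := by
  have := h.1
  have := h.2.1
  obtain ⟨γ⟩ : Nonempty (EnvDist d) := μ.nonempty_of_neZero
  have hind : ProbabilityTheory.iIndepFun (fun (x : Site d) (ω : EnvOmega d) => ω x) ν := by
    rw [ProbabilityTheory.iIndepFun_iff_map_fun_eq_infinitePi_map
      (fun i => measurable_pi_apply i)]
    have hm : ∀ i, ν.map (fun ω : EnvOmega d => ω i) = μ := by
      intro i
      rw [h.eq_infinitePi]
      exact (measurePreserving_eval_infinitePi (fun _ : Site d => μ) i).map_eq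
    simp_rw [hm]
    rw [← h.eq_infinitePi]
    exact Measure.map_id
  have hpair := hind.indepFun_finset S T hST (fun i => measurable_pi_apply i)
  -- A local function factors through the restriction of the environment to its sites:
  -- precompose it with an extension by the constant environment `γ`.
  let ext (U : Finset (Site d)) (u : U → EnvDist d) : EnvOmega d :=
    fun x => if hx : x ∈ U then u ⟨x, hx⟩ else γ
  have hext : ∀ U, Measurable (ext U) := by
    intro U
    refine measurable_pi_lambda _ fun x => ?_
    by_cases hx : x ∈ U
    · simpa [ext, hx] using measurable_pi_apply _
    · simp [ext, hx]
  have hcomp := hpair.comp (hf.comp (hext S)) (hg.comp (hext T))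
  have e1 : ((f ∘ ext S) ∘ fun (ω : EnvOmega d) (i : S) => ω i) = f := by
    ext ω
    exact hfS _ _ fun x hx => by simp [ext, hx]
  have e2 : ((g ∘ ext T) ∘ fun (ω : EnvOmega d) (i : T) => ω i) = g := by
    ext ω
    exact hgT _ _ fun x hx => by simp [ext, hx]
  rw [e1, e2] at hcomp
  exact hcomp.integral_fun_mul_eq_mul_integral hf.aestronglyMeasurable hg.aestronglyMeasurable

/-! ### Consequences of the annealed cylinder formula -/

/-- Conditionally on an initial path segment whose sites, except possibly the last, lie outside
`T`, the probability that `T` is not closed is the unconditional one: the weight of the segment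
does not involve the environment at its endpoint. -/
lemma IsRWRE.cylinder_indep {d : ℕ} {μ : Measure (EnvDist d)} {P : Measure (RWSpace d)}
    (hP : IsRWRE μ P) (n : ℕ) (x : ℕ → Site d) (T : Finset (Site d))
    (hT : ∀ k < n, x k ∉ T) :
    P {q | ¬ ClosedIn q.1 T ∧ ∀ k ≤ n, q.2 k = x k} =
      (P.map Prod.fst) {ω | ¬ ClosedIn ω T} * P {q | ∀ k ≤ n, q.2 k = x k} := by
  obtain ⟨hPp, hiid, hcyl⟩ := hP
  have := hiid.2.1
  have hA : MeasurableSet {ω : EnvOmega d | ¬ ClosedIn ω T} := (measurableSet_closedIn T).compl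
  have h1 := hcyl n x _ hA
  have h2 := hcyl n x univ MeasurableSet.univ
  have h3 : ∫ ω in {ω : EnvOmega d | ¬ ClosedIn ω T}, pathWeight ω n x ∂(P.map Prod.fst) =
      ((P.map Prod.fst) {ω | ¬ ClosedIn ω T}).toReal *
        ∫ ω, pathWeight ω n x ∂(P.map Prod.fst) := by
    have := hiid.integral_mul (S := T) (T := (Finset.range n).image x)
      (f := {ω : EnvOmega d | ¬ ClosedIn ω T}.indicator 1) (g := fun ω => pathWeight ω n x)
      (by
        rw [Finset.disjoint_left]
        intro y hy hy'
        obtain ⟨k, hk, rfl⟩ := Finset.mem_image.1 hy'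
        exact hT k (Finset.mem_range.1 hk) hy)
      (measurable_one.indicator hA) (measurable_pathWeight n x)
      (by
        intro ω ω' hω
        have : ClosedIn ω T ↔ ClosedIn ω' T := by
          unfold ClosedIn
          refine forall₂_congr fun y hy => ?_
          rw [hω y hy]
        simp [Set.indicator, this])
      (by
        intro ω ω' hω
        refine Finset.prod_congr rfl fun k hk => ?_
        rw [hω _ (Finset.mem_image_of_mem _ hk)])
    rw [integral_indicator_one hA] at this
    rw [← integral_indicator hA]
    refine Eq.trans (integral_congr_ae (Eventually.of_forall fun ω => ?_)) this
    simp only [Set.indicator]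
    split_ifs <;> simp
  simp only [mem_ofPred_eq, mem_univ, true_and, Measure.restrict_univ] at h1 h2
  rw [← ENNReal.toReal_eq_toReal_iff' (measure_ne_top _ _)
    (ENNReal.mul_ne_top (measure_ne_top _ _) (measure_ne_top _ _)), ENNReal.toReal_mul, h1, h2, h3]
  ring

lemma IsRWRE.ae_start {d : ℕ} {μ : Measure (EnvDist d)} {P : Measure (RWSpace d)}
    (hP : IsRWRE μ P) : ∀ᵐ q ∂P, q.2 0 = 0 := by
  obtain ⟨hPp, hiid, hcyl⟩ := hP
  have : ∀ y : Site d, y ≠ 0 → ∀ᵐ q ∂P, q.2 0 ≠ y := by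
    intro y hy
    have h := hcyl 0 (fun _ => y) univ MeasurableSet.univ
    simp only [hy, if_false, zero_mul, mem_univ, true_and, Nat.le_zero, forall_eq] at h
    rw [ENNReal.toReal_eq_zero_iff] at h
    rw [ae_iff]
    simpa using h.resolve_right (measure_ne_top _ _)
  have h2 : ∀ᵐ q ∂P, ∀ y : Site d, y ≠ 0 → q.2 0 ≠ y :=
    ae_all_iff.2 fun y => by
      by_cases hy : y = 0
      · simp [hy]
      · simpa [hy] using this y hy
  filter_upwards [h2] with q hq
  by_contra h
  exact hq _ h rfl

/-- Reading a finite path segment as an infinite path, padded with the origin. -/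
def extPath {d : ℕ} {n : ℕ} (π : Fin (n + 1) → Site d) : ℕ → Site d :=
  fun k => if h : k < n + 1 then π ⟨k, h⟩ else 0

lemma extPath_restrict {d : ℕ} {n : ℕ} (w : ℕ → Site d) {k : ℕ} (hk : k ≤ n) :
    extPath (fun i : Fin (n + 1) => w i) k = w k := by
  simp [extPath, Nat.lt_succ_of_le hk]

/-- Almost surely the walk only uses edges of `G(ω)`. -/
lemma IsRWRE.ae_edge {d : ℕ} {μ : Measure (EnvDist d)} {P : Measure (RWSpace d)}
    (hP : IsRWRE μ P) : ∀ᵐ q ∂P, ∀ n, 0 < (q.1 (q.2 n)).prob (q.2 (n + 1) - q.2 n) := by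
  obtain ⟨hPp, hiid, hcyl⟩ := hP
  rw [ae_all_iff]
  intro n
  have : ∀ π : Fin (n + 1 + 1) → Site d, ∀ᵐ q ∂P,
      (¬ 0 < (q.1 (extPath π n)).prob (extPath π (n + 1) - extPath π n)) →
        ¬ ∀ k ≤ n + 1, q.2 k = extPath π k := by
    intro π
    set x := extPath π
    have hA : MeasurableSet {ω : EnvOmega d | ¬ 0 < (ω (x n)).prob (x (n + 1) - x n)} :=
      (measurableSet_lt measurable_const (measurable_prob _ _)).compl
    have h := hcyl (n + 1) x _ hA
    rw [setIntegral_eq_zero_of_forall_eq_zero, mul_zero, ENNReal.toReal_eq_zero_iff] at h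
    · rw [ae_iff]
      simpa only [mem_ofPred_eq, Classical.not_imp, not_not] using
        h.resolve_right (measure_ne_top _ _)
    · intro ω hω
      have h0 : (ω (x n)).prob (x (n + 1) - x n) = 0 :=
        le_antisymm (not_lt.1 hω) ((ω _).nonneg _)
      unfold pathWeight
      exact Finset.prod_eq_zero (Finset.self_mem_range_succ n) h0
  filter_upwards [ae_all_iff.2 this] with q hq
  by_contra hc
  have hr := fun k (hk : k ≤ n + 1) => extPath_restrict (n := n + 1) q.2 hk
  refine hq (fun i => q.2 i) ?_ fun k hk => (hr k hk).symm
  rwa [hr n (Nat.le_succ n), hr (n + 1) le_rfl]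

/-! ### Escape from finite sets when every forward cluster is infinite -/

/-- `stayProb ω A j x` is the quenched probability that the walk started at `x` stays in `A`
up to time `j`. -/
noncomputable def stayProb {d : ℕ} (ω : EnvOmega d) (A : Finset (Site d)) : ℕ → Site d → ℝ
  | 0, x => if x ∈ A then 1 else 0
  | j + 1, x => if x ∈ A then ∑ y ∈ A, (ω x).prob (y - x) * stayProb ω A j y else 0

lemma stayProb_nonneg {d : ℕ} (ω : EnvOmega d) (A : Finset (Site d)) (j : ℕ) (x : Site d) :
    0 ≤ stayProb ω A j x := by
  induction j generalizing x with
  | zero => unfold stayProb; split_ifs <;> simp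
  | succ j ih =>
    unfold stayProb
    split_ifs
    · exact Finset.sum_nonneg fun y _ => mul_nonneg ((ω x).nonneg _) (ih y)
    · exact le_rfl

lemma stayProb_le_one {d : ℕ} (ω : EnvOmega d) (A : Finset (Site d)) (j : ℕ) (x : Site d) :
    stayProb ω A j x ≤ 1 := by
  induction j generalizing x with
  | zero => unfold stayProb; split_ifs <;> simp
  | succ j ih =>
    unfold stayProb
    split_ifs
    · refine le_trans (Finset.sum_le_sum fun y _ => ?_) (sum_step_le_one (ω x) x A)
      exact mul_le_of_le_one_right ((ω x).nonneg _) (ih y)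
    · exact zero_le_one

lemma stayProb_antitone {d : ℕ} (ω : EnvOmega d) (A : Finset (Site d)) (x : Site d) :
    Antitone fun j => stayProb ω A j x := by
  refine antitone_nat_of_succ_le fun j => ?_
  induction j generalizing x with
  | zero =>
    by_cases hx : x ∈ A
    · simpa [stayProb, hx] using stayProb_le_one ω A 1 x
    · simp [stayProb, hx]
  | succ j ih =>
    by_cases hx : x ∈ A
    · rw [stayProb, stayProb, if_pos hx, if_pos hx]
      exact Finset.sum_le_sum fun y _ => mul_le_mul_of_nonneg_left (ih y) ((ω x).nonneg _)
    · simp [stayProb, hx]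

lemma measurable_stayProb {d : ℕ} (A : Finset (Site d)) (j : ℕ) (x : Site d) :
    Measurable fun ω : EnvOmega d => stayProb ω A j x := by
  induction j generalizing x with
  | zero => unfold stayProb; exact measurable_const
  | succ j ih =>
    unfold stayProb
    split_ifs
    · exact Finset.measurable_sum _ fun y _ => (measurable_prob x _).mul (ih y)
    · exact measurable_const

/-- A maximum principle: the limit of `stayProb` is harmonic for the walk killed outside `A`, so
the set where it attains a positive maximum would be closed. -/
lemma stayProb_tendsto_zero {d : ℕ} (ω : EnvOmega d) (A : Finset (Site d))
    (hω : ∀ B : Finset (Site d), B.Nonempty → ¬ ClosedIn ω B) (x : Site d) :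
    Tendsto (fun j => stayProb ω A j x) atTop (𝓝 0) := by
  have hlim : ∀ x, ∃ l, Tendsto (fun j => stayProb ω A j x) atTop (𝓝 l) := fun x =>
    ⟨_, tendsto_atTop_ciInf (stayProb_antitone ω A x)
      ⟨0, by rintro _ ⟨j, rfl⟩; exact stayProb_nonneg ω A j x⟩⟩
  choose H hH using hlim
  have H0 : ∀ x, 0 ≤ H x := fun x => ge_of_tendsto' (hH x) fun j => stayProb_nonneg ω A j x
  have Hout : ∀ x, x ∉ A → H x = 0 := by
    intro x hx
    refine tendsto_nhds_unique (hH x) ?_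
    have : (fun j => stayProb ω A j x) = fun _ => 0 := by
      ext j; cases j <;> simp [stayProb, hx]
    rw [this]; exact tendsto_const_nhds
  have Hin : ∀ x ∈ A, H x = ∑ y ∈ A, (ω x).prob (y - x) * H y := by
    intro x hx
    refine tendsto_nhds_unique ((tendsto_add_atTop_iff_nat 1).2 (hH x)) ?_
    simp only [stayProb, hx, if_true]
    exact tendsto_finsetSum _ fun y _ => (hH y).const_mul _
  suffices H x = 0 by rw [← this]; exact hH x
  by_contra hne
  have hxpos : 0 < H x := lt_of_le_of_ne (H0 x) (Ne.symm hne)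
  have hxA : x ∈ A := by by_contra h; exact hne (Hout x h)
  obtain ⟨m, hmA, hm⟩ := A.exists_max_image H ⟨x, hxA⟩
  have hM : 0 < H m := lt_of_lt_of_le hxpos (hm x hxA)
  have hle : ∀ y, H y ≤ H m := by
    intro y
    by_cases hy : y ∈ A
    · exact hm y hy
    · rw [Hout y hy]; exact hM.le
  refine hω (A.filter fun y => H y = H m) ⟨m, by simp [hmA]⟩ ?_
  intro y hy z hz hp
  obtain ⟨hyA, hyM⟩ := Finset.mem_filter.1 hy
  have hzM : H z < H m := by
    refine lt_of_le_of_ne (hle z) fun h => hz (Finset.mem_filter.2 ⟨?_, h⟩)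
    by_contra hzA
    rw [Hout z hzA] at h
    exact hM.ne h
  have hsum : ∑ w ∈ insert z A, (ω y).prob (w - y) * H w = H m := by
    rw [← hyM, Hin y hyA]
    symm
    refine Finset.sum_subset (Finset.subset_insert _ _) fun w _ hw => ?_
    rw [Hout w hw, mul_zero]
  have hlt : ∑ w ∈ insert z A, (ω y).prob (w - y) * H w
      < ∑ w ∈ insert z A, (ω y).prob (w - y) * H m :=
    Finset.sum_lt_sum (fun w _ => mul_le_mul_of_nonneg_left (hle w) ((ω y).nonneg _))
      ⟨z, Finset.mem_insert_self _ _, mul_lt_mul_of_pos_left hzM hp⟩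
  rw [← Finset.sum_mul, hsum] at hlt
  nlinarith [sum_step_le_one (ω y) y (insert z A)]

/-- The Markov property after a prescribed initial segment `x 0, …, x n`: the remaining `j` steps
contribute the quenched probability of staying in `A` from `x n`. Only the upper bound is stated,
which spares a condition on `x 0`. -/
lemma IsRWRE.stay_le {d : ℕ} {μ : Measure (EnvDist d)} {P : Measure (RWSpace d)}
    (hP : IsRWRE μ P) (A : Finset (Site d)) (j n : ℕ) (x : ℕ → Site d) :
    P.real {q | (∀ k ≤ n, q.2 k = x k) ∧ ∀ k ≤ n + j, q.2 k ∈ A} ≤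
      ∫ ω, pathWeight ω n x * stayProb ω A j (x n) ∂(P.map Prod.fst) := by
  have := hP.1
  have := hP.2.1.2.1
  have hint0 : ∀ j n x, 0 ≤ ∫ ω, pathWeight ω n x * stayProb ω A j (x n) ∂(P.map Prod.fst) :=
    fun j n x => integral_nonneg fun ω => mul_nonneg (pathWeight_nonneg _ _ _)
      (stayProb_nonneg _ _ _ _)
  by_cases hxA : x n ∈ A
  swap
  · have : {q : RWSpace d | (∀ k ≤ n, q.2 k = x k) ∧ ∀ k ≤ n + j, q.2 k ∈ A} = ∅ := by
      ext q
      simp only [mem_ofPred_eq, mem_empty_iff_false, iff_false]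
      rintro ⟨h1, h2⟩
      exact hxA (h1 n le_rfl ▸ h2 n (Nat.le_add_right _ _))
    rw [this, measureReal_empty]
    exact hint0 j n x
  induction j generalizing n x with
  | zero =>
    have h := hP.2.2 n x univ MeasurableSet.univ
    have h0 : 0 ≤ ∫ ω, pathWeight ω n x ∂(P.map Prod.fst) :=
      integral_nonneg fun ω => pathWeight_nonneg _ _ _
    simp only [mem_univ, true_and, Measure.restrict_univ] at h
    simp only [stayProb, hxA, if_true, mul_one]
    calc P.real {q | (∀ k ≤ n, q.2 k = x k) ∧ ∀ k ≤ n + 0, q.2 k ∈ A}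
        ≤ P.real {q | ∀ k ≤ n, q.2 k = x k} := measureReal_mono fun q hq => hq.1
      _ = _ := h
      _ ≤ _ := by split_ifs <;> simp [h0]
  | succ j ih =>
    have hsub : {q : RWSpace d | (∀ k ≤ n, q.2 k = x k) ∧ ∀ k ≤ n + (j + 1), q.2 k ∈ A} ⊆
        ⋃ y ∈ A, {q | (∀ k ≤ n + 1, q.2 k = Function.update x (n + 1) y k) ∧
          ∀ k ≤ n + 1 + j, q.2 k ∈ A} := by
      rintro q ⟨h1, h2⟩
      simp only [mem_iUnion]
      refine ⟨q.2 (n + 1), h2 _ (by omega), fun k hk => ?_, fun k hk => h2 k (by omega)⟩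
      rcases Nat.lt_or_eq_of_le hk with hk | rfl
      · rw [Function.update_of_ne (by omega)]; exact h1 k (by omega)
      · simp
    refine (measureReal_mono hsub (measure_ne_top _ _)).trans ((measureReal_biUnion_finset_le _ _).trans ?_)
    refine (Finset.sum_le_sum fun y hy => ih (n + 1) _ (by simpa using hy)).trans
      (le_of_eq ?_)
    rw [← integral_finsetSum]
    · congr 1
      ext ω
      simp only [stayProb, hxA, if_true, Function.update_self, Finset.mul_sum]
      refine Finset.sum_congr rfl fun y _ => ?_
      have : pathWeight ω (n + 1) (Function.update x (n + 1) y) =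
          pathWeight ω n x * (ω (x n)).prob (y - x n) := by
        unfold pathWeight
        rw [Finset.prod_range_succ, Function.update_self, Function.update_of_ne (by omega)]
        congr 1
        refine Finset.prod_congr rfl fun k hk => ?_
        have := Finset.mem_range.1 hk
        rw [Function.update_of_ne (by omega), Function.update_of_ne (by omega)]
      rw [this, mul_assoc]
    · intro y _
      refine Integrable.of_bound (C := 1)
        ((measurable_pathWeight _ _).mul (measurable_stayProb _ _ _)).aestronglyMeasurable
        (Eventually.of_forall fun ω => ?_)
      rw [Real.norm_of_nonneg (mul_nonneg (pathWeight_nonneg _ _ _) (stayProb_nonneg _ _ _ _))]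
      exact mul_le_one₀ (pathWeight_le_one _ _ _) (stayProb_nonneg _ _ _ _)
        (stayProb_le_one _ _ _ _)

lemma IsRWRE.stay_null {d : ℕ} {μ : Measure (EnvDist d)} {P : Measure (RWSpace d)}
    (hP : IsRWRE μ P)
    (hω : ∀ᵐ ω ∂(P.map Prod.fst), ∀ B : Finset (Site d), B.Nonempty → ¬ ClosedIn ω B)
    (A : Finset (Site d)) : P {q | ∀ k, q.2 k ∈ A} = 0 := by
  have := hP.1
  have := hP.2.1.2.1
  have hle : ∀ j, P.real {q | ∀ k, q.2 k ∈ A} ≤ ∫ ω, stayProb ω A j 0 ∂(P.map Prod.fst) := by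
    intro j
    have h := hP.stay_le A j 0 (fun _ => 0)
    simp only [pathWeight, Finset.range_zero, Finset.prod_empty, one_mul] at h
    refine le_trans ?_ h
    refine ENNReal.toReal_mono (measure_ne_top _ _) (measure_mono_ae ?_)
    filter_upwards [hP.ae_start] with q hq hA
    exact ⟨fun k hk => by rw [Nat.le_zero.1 hk]; exact hq, fun k _ => hA k⟩
  have hlim : Tendsto (fun j => ∫ ω, stayProb ω A j 0 ∂(P.map Prod.fst)) atTop
      (𝓝 (∫ _, (0 : ℝ) ∂(P.map Prod.fst))) := by
    refine tendsto_integral_of_dominated_convergence (fun _ => 1)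
      (fun j => (measurable_stayProb A j 0).aestronglyMeasurable) (integrable_const _)
      (fun j => Eventually.of_forall fun ω => ?_) ?_
    · rw [Real.norm_of_nonneg (stayProb_nonneg _ _ _ _)]
      exact stayProb_le_one _ _ _ _
    · filter_upwards [hω] with ω h using stayProb_tendsto_zero ω A h 0
  rw [integral_zero] at hlim
  have h0 : P.real {q | ∀ k, q.2 k ∈ A} = 0 :=
    le_antisymm (ge_of_tendsto' hlim hle) measureReal_nonneg
  exact (measureReal_eq_zero_iff).1 h0

/-! ### Trapping in fresh half-spaces -/

/-- The first-entrance segments: `π` enters the half-space `{N ≤ ℓ}` at its last site only. -/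
def FirstHit {d : ℕ} (ℓ : Site d →+ ℤ) (N : ℤ) (i : Σ n : ℕ, (Fin (n + 1) → Site d)) : Prop :=
  (∀ k < i.1, ℓ (extPath i.2 k) < N) ∧ N ≤ ℓ (extPath i.2 i.1)

/-- If `B` is closed with positive probability, the walk is almost surely bounded above in
direction `ℓ`: at each first entrance into a half-space the environment beyond is fresh, and a
translate of `B` lying in that half-space, with the walk at its `ℓ`-lowest site, traps the walk
with a fixed probability. -/
lemma IsRWRE.bounded_direction {d : ℕ} {μ : Measure (EnvDist d)} {P : Measure (RWSpace d)}
    (hP : IsRWRE μ P) (B : Finset (Site d)) (hB : B.Nonempty)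
    (hpos : (P.map Prod.fst) {ω | ClosedIn ω B} ≠ 0) (ℓ : Site d →+ ℤ) :
    P {q | ∀ N : ℕ, ∃ n, (N : ℤ) ≤ ℓ (q.2 n)} = 0 := by
  have := hP.1
  have := hP.2.1.2.1
  set ν := P.map Prod.fst with hν
  obtain ⟨z, hzB, hz⟩ := B.exists_min_image ℓ hB
  -- `T x` is the translate of `B` whose lowest site is `x`.
  let T : Site d → Finset (Site d) := fun x => B.image (· + (x - z))
  have hTmem : ∀ x, x ∈ T x := fun x => Finset.mem_image.2 ⟨z, hzB, by simp⟩
  have hTlow : ∀ x, ∀ y ∈ T x, ℓ x ≤ ℓ y := by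
    intro x y hy
    obtain ⟨b, hb, rfl⟩ := Finset.mem_image.1 hy
    have := hz b hb
    rw [map_add, map_sub]
    omega
  set c : ℝ≥0∞ := ν {ω | ¬ ClosedIn ω B} with hc
  have hcT : ∀ x, ν {ω | ¬ ClosedIn ω (T x)} = c := by
    intro x
    have h1 := prob_compl_eq_one_sub (μ := ν) (measurableSet_closedIn (T x))
    have h2 := prob_compl_eq_one_sub (μ := ν) (measurableSet_closedIn B)
    rw [hP.2.1.closedIn_translate (x - z) B, ← h2] at h1
    exact h1
  have hc1 : c < 1 := by
    have h2 := prob_compl_eq_one_sub (μ := ν) (measurableSet_closedIn B)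
    have : c = 1 - ν {ω | ClosedIn ω B} := h2
    rw [this]
    exact ENNReal.sub_lt_self ENNReal.one_ne_top one_ne_zero hpos
  let E : ℕ → Set (RWSpace d) := fun N => {q | ∃ n, (N : ℤ) ≤ ℓ (q.2 n)}
  have hmeas : ∀ k (S : Set (Site d)), MeasurableSet {q : RWSpace d | q.2 k ∈ S} := fun k S =>
    ((measurable_pi_apply k).comp measurable_snd) (Set.to_countable S).measurableSet
  have hE : ∀ N, MeasurableSet (E N) := by
    intro N
    have : E N = ⋃ n, {q | q.2 n ∈ {y | (N : ℤ) ≤ ℓ y}} := by ext q; simp [E]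
    rw [this]
    exact MeasurableSet.iUnion fun n => hmeas n _
  have hEanti : Antitone E := by
    rintro M N hMN q ⟨n, hn⟩
    exact ⟨n, le_trans (by exact_mod_cast hMN) hn⟩
  have hset : {q : RWSpace d | ∀ N : ℕ, ∃ n, (N : ℤ) ≤ ℓ (q.2 n)} = ⋂ N, E N := by
    ext q; simp [E]
  rw [hset]
  -- If the walk is unbounded in direction `ℓ`, the set `T x` at its first entrance `x` into
  -- `{N ≤ ℓ}` was not closed. Summing over first-entrance segments gives the factor `c < 1`.
  have key : ∀ N, P (⋂ N, E N) ≤ c * P (E N) := by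
    intro N
    let I := {i : Σ n : ℕ, (Fin (n + 1) → Site d) // FirstHit ℓ N i}
    let C : I → Set (RWSpace d) := fun i => {q | ∀ k ≤ i.1.1, q.2 k = extPath i.1.2 k}
    have hC : ∀ i, MeasurableSet (C i) := by
      intro i
      have : C i = ⋂ k, ⋂ _ : k ≤ i.1.1, {q | q.2 k ∈ ({extPath i.1.2 k} : Set (Site d))} := by
        ext q; simp [C]
      rw [this]
      exact MeasurableSet.iInter fun k => MeasurableSet.iInter fun _ => hmeas k _
    have hdisj : Pairwise (Function.onFun Disjoint C) := by
      rintro ⟨⟨n, π⟩, h1, h2⟩ ⟨⟨m, ρ⟩, h3, h4⟩ hne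
      refine Set.disjoint_left.2 fun q hq hq' => hne ?_
      simp only [C, mem_ofPred_eq] at hq hq' h1 h2 h3 h4
      have hnm : n = m := by
        rcases lt_trichotomy n m with h | h | h
        · have := h3 n h
          rw [← hq' n h.le, hq n le_rfl] at this
          omega
        · exact h
        · have := h1 m h
          rw [← hq m h.le, hq' m le_rfl] at this
          omega
      subst hnm
      have : π = ρ := by
        ext1 k
        have hk : (k : ℕ) ≤ n := Nat.lt_succ_iff.1 k.2
        have := (hq k hk).symm.trans (hq' k hk)
        simpa [extPath, hk] using this
      subst this
      rfl
    have hfirst : ∀ q ∈ E N, ∃ i : I, q ∈ C i := by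
      intro q hq
      have hr := fun k (hk : k ≤ Nat.find hq) => extPath_restrict (n := Nat.find hq) q.2 hk
      refine ⟨⟨⟨Nat.find hq, fun i => q.2 i⟩, fun k hk => ?_, ?_⟩, fun k hk => (hr k hk).symm⟩
      · simp only at hk ⊢
        rw [hr k hk.le]
        exact not_le.1 (Nat.find_min hq hk)
      · simp only
        rw [hr _ le_rfl]
        exact Nat.find_spec hq
    have hCE : (⋃ i, C i) ⊆ E N := by
      intro q hq
      obtain ⟨i, hi⟩ := mem_iUnion.1 hq
      exact ⟨i.1.1, by rw [hi _ le_rfl]; exact i.2.2⟩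
    have hcover : ∀ᵐ q ∂P, q ∈ (⋂ N, E N) →
        q ∈ ⋃ i : I, {q | ¬ ClosedIn q.1 (T (extPath i.1.2 i.1.1)) ∧
          ∀ k ≤ i.1.1, q.2 k = extPath i.1.2 k} := by
      filter_upwards [hP.ae_edge] with q hq hqE
      obtain ⟨i, hi⟩ := hfirst q (mem_iInter.1 hqE N)
      refine mem_iUnion.2 ⟨i, fun hcl => ?_, hi⟩
      set n := i.1.1
      set t := T (extPath i.1.2 n)
      have hstay : ∀ m, q.2 (n + m) ∈ t := by
        intro m
        induction m with
        | zero => rw [Nat.add_zero, hi n le_rfl]; exact hTmem _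
        | succ m ih => by_contra hcon; exact hcl _ ih _ hcon (hq (n + m))
      -- The path visits only `q.2 0, …, q.2 n` and the sites of `t`, hence `ℓ` is bounded on it.
      obtain ⟨M, hM⟩ := (((Finset.range n).image q.2 ∪ t).image ℓ).bddAbove
      obtain ⟨m, hm⟩ := mem_iInter.1 hqE (M.toNat + 1)
      have hle : ℓ (q.2 m) ≤ M := by
        refine hM (Finset.mem_coe.2 (Finset.mem_image_of_mem _ (Finset.mem_union.2 ?_)))
        rcases lt_or_ge m n with h | h
        · exact Or.inl (Finset.mem_image_of_mem _ (Finset.mem_range.2 h))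
        · right
          have := hstay (m - n)
          rwa [Nat.add_sub_cancel' h] at this
      push_cast at hm
      omega
    calc P (⋂ N, E N)
        ≤ P (⋃ i : I, {q | ¬ ClosedIn q.1 (T (extPath i.1.2 i.1.1)) ∧
          ∀ k ≤ i.1.1, q.2 k = extPath i.1.2 k}) := measure_mono_ae hcover
      _ ≤ ∑' i : I, P {q | ¬ ClosedIn q.1 (T (extPath i.1.2 i.1.1)) ∧
          ∀ k ≤ i.1.1, q.2 k = extPath i.1.2 k} := measure_iUnion_le _
      _ = ∑' i : I, c * P (C i) := by
          refine tsum_congr fun i => ?_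
          rw [hP.cylinder_indep, ← hν, hcT]
          intro k hk hkT
          have h1 := i.2.1 k hk
          have h2 := i.2.2
          have h3 := hTlow _ _ hkT
          omega
      _ = c * P (⋃ i, C i) := by rw [ENNReal.tsum_mul_left, measure_iUnion hdisj hC]
      _ ≤ c * P (E N) := by gcongr
  -- Letting `N → ∞` on the right-hand side.
  have hlim : P (⋂ N, E N) ≤ c * P (⋂ N, E N) := by
    have h := tendsto_measure_iInter_atTop (μ := P) (fun N => (hE N).nullMeasurableSet) hEanti
      ⟨0, measure_ne_top _ _⟩
    exact ge_of_tendsto' (ENNReal.Tendsto.const_mul h (Or.inr hc1.ne_top)) key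
  by_contra hne
  have : c * P (⋂ N, E N) < 1 * P (⋂ N, E N) :=
    ENNReal.mul_lt_mul_left hne (measure_ne_top _ _) hc1
  rw [one_mul] at this
  exact absurd hlim (not_le.2 this)

/-! ### The dichotomy -/

/-- (i) if `θ₊ = 1` the walk visits infinitely many sites `P`-a.s.;
(ii) if `θ₊ < 1` the walk gets stuck on a finite set of sites `P`-a.s. -/
theorem stmt5 {d : ℕ} (hd : 2 ≤ d) (μ : Measure (EnvDist d))
    (P : Measure (RWSpace d)) (hP : IsRWRE μ P) :
    (((P.map Prod.fst) {ω : EnvOmega d | (clusterC ω 0).Infinite} = 1 →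
        P {q : RWSpace d | (Set.range q.2).Finite} = 0) ∧
     ((P.map Prod.fst) {ω : EnvOmega d | (clusterC ω 0).Infinite} < 1 →
        P {q : RWSpace d | (Set.range q.2).Finite} = 1)) := by
  have := hP.1
  have := hP.2.1.2.1
  set ν := P.map Prod.fst with hν
  have hinf : {ω : EnvOmega d | (clusterC ω 0).Infinite} =
      (⋃ B : Finset (Site d), ⋃ _ : 0 ∈ B, {ω | ClosedIn ω B})ᶜ := by
    ext ω
    simp only [mem_ofPred_eq, mem_compl_iff, mem_iUnion, exists_prop]
    rw [Set.Infinite, cluster_finite_iff]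
  have hmeas : MeasurableSet (⋃ B : Finset (Site d), ⋃ _ : 0 ∈ B,
      {ω : EnvOmega d | ClosedIn ω B}) :=
    MeasurableSet.iUnion fun B => MeasurableSet.iUnion fun _ => measurableSet_closedIn B
  rw [hinf]
  constructor
  · intro h1
    rw [prob_compl_eq_one_iff hmeas, measure_iUnion_null_iff] at h1
    have hnull : ∀ B : Finset (Site d), B.Nonempty → ∀ᵐ ω ∂ν, ¬ ClosedIn ω B := by
      rintro B ⟨z, hz⟩
      have h2 := measure_iUnion_null_iff.1 (h1 (B.image (· + -z)))
        (Finset.mem_image.2 ⟨z, hz, by simp⟩)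
      rw [hP.2.1.closedIn_translate] at h2
      rw [ae_iff]
      simpa using h2
    have hω : ∀ᵐ ω ∂ν, ∀ B : Finset (Site d), B.Nonempty → ¬ ClosedIn ω B := by
      refine ae_all_iff.2 fun B => ?_
      by_cases hB : B.Nonempty
      · simpa [hB] using hnull B hB
      · simp [hB]
    refine measure_mono_null (t := ⋃ A : Finset (Site d), {q : RWSpace d | ∀ k, q.2 k ∈ A}) ?_
      (measure_iUnion_null fun A => hP.stay_null hω A)
    intro q hq
    exact mem_iUnion.2 ⟨hq.toFinset, fun k => hq.mem_toFinset.2 ⟨k, rfl⟩⟩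
  · intro h1
    obtain ⟨B, h0, hB⟩ : ∃ B : Finset (Site d), 0 ∈ B ∧ ν {ω | ClosedIn ω B} ≠ 0 := by
      by_contra! hcon
      refine h1.ne ((prob_compl_eq_one_iff hmeas).2 ?_)
      exact measure_iUnion_null fun B => measure_iUnion_null fun hB => hcon B hB
    have hb := fun ℓ => hP.bounded_direction B ⟨0, h0⟩ hB ℓ
    have hae : ∀ᵐ q ∂P, ∀ i : Fin d,
        (∃ N : ℕ, ∀ n, q.2 n i < (N : ℤ)) ∧ ∃ N : ℕ, ∀ n, -q.2 n i < (N : ℤ) := by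
      refine ae_all_iff.2 fun i => ?_
      have h2 : ∀ᵐ q ∂P, ¬ ∀ N : ℕ, ∃ n, (N : ℤ) ≤ q.2 n i := by
        rw [ae_iff]
        simp only [not_not]
        exact hb (Pi.evalAddMonoidHom (fun _ : Fin d => ℤ) i)
      have h3 : ∀ᵐ q ∂P, ¬ ∀ N : ℕ, ∃ n, (N : ℤ) ≤ -q.2 n i := by
        rw [ae_iff]
        simp only [not_not]
        exact hb (-Pi.evalAddMonoidHom (fun _ : Fin d => ℤ) i)
      filter_upwards [h2, h3] with q h2 h3
      push Not at h2 h3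
      exact ⟨h2, h3⟩
    have hfin : ∀ᵐ q ∂P, q ∈ {q : RWSpace d | (Set.range q.2).Finite} := by
      filter_upwards [hae] with q hq
      choose hu hl using hq
      choose u hu using hu
      choose l hl using hl
      refine (Set.finite_Icc (fun i => -(l i : ℤ)) fun i => (u i : ℤ)).subset ?_
      rintro _ ⟨n, rfl⟩
      exact ⟨fun i => by have := hl i n; simp only; omega, fun i => (hu i n).le⟩
    exact (measure_congr (eventuallyEq_univ.2 hfin)).trans measure_univ
end

section
/- Assume θ_+ = 1 and condition (★). Then for each unit vector v ∈ R^d, P-almost surely liminf_{n→∞} X_n·v ∈ {−∞, +∞}. -/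
/-!
The annealed walk either tends to `+∞` in the direction `v` or is unbounded below. The main tool is
repeated trials (`RWRE.trials`): if, at infinitely many times, an event has conditional
probability at least `c > 0` given the path so far, then it occurs almost surely. This is a
consequence of Lévy's upward theorem.

* *Infinite range* (`RWRE.ae_infinite_range`). A site visited infinitely often passes this on to
  its successors in the graph, hence to its whole forward cluster, which is infinite since
  `θ₊ = 1`. So the walk cannot visit only finitely many sites.
* *Leaving slabs* (`RWRE.ae_unbounded`). Choose `e = e_i` with `e · v ≠ 0`. A walk with infinite
  range confined to a slab `{|x · v| ≤ N}` meets infinitely many lines in the direction `e`. On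
  first reaching such a line, none of its sites has been used, so by independence the walk makes
  `K` consecutive steps `e` with annealed probability `E[ω_o(e)]^K > 0`, and this leaves the slab
  for `K` large. Hence `|X_n · v|` is unbounded.
* *Dichotomy* (`RWRE.ae_tendsto_of_bddBelow`). Let `z` be a step with `z · v > 0` and positive
  annealed probability, let `ε = z · v / 2`, and let `p` be the probability that `X_n · v ≥ -ε` for
  all `n`. If `p = 0` then the walk is unbounded below, for a time at which `X_n · v` is within `ε`
  of its infimum would start a path staying above its initial level minus `ε`
  (`RWRE.ae_not_bddBelow`). If `p > 0` and the walk is unbounded above, then at each record time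
  the walk steps by `z` and then stays above the record level, with probability at least
  `E[ω_o(z)] p`: the sites involved are new (`RWRE.record_stay`). So it eventually stays above
  every level (`RWRE.ae_transient`). If there is no such `z`, then `X_n · v` is nonincreasing and
  unbounded, hence unbounded below.

Annealed path probabilities are treated through cylinders: the weight of a path that uses new
sites after time `n` factors (`RWRE.ann_concat`), and inequalities between cylinders pass to the
events of staying in a set forever (`RWRE.stay_le_of_cyl`).
-/

open MeasureTheory Filter Set Topology
open scoped Classical ENNReal

namespace RWRE

open ProbabilityTheory

noncomputable section

variable {d : ℕ}

/-! ### Path space -/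

/-- The cylinder of all paths that agree with `x` up to and including time `n`. -/
def cyl (n : ℕ) (x : ℕ → Site d) : Set (PathSpace d) := {X | ∀ k ≤ n, X k = x k}

lemma measurableSet_eval (k : ℕ) (s : Set (Site d)) :
    MeasurableSet {X : PathSpace d | X k ∈ s} :=
  measurable_pi_apply k (MeasurableSet.of_discrete (s := s))

/-- The restriction of a path to the times `0, …, n`. -/
abbrev res (n : ℕ) (X : PathSpace d) : Finset.Iic n → Site d := Preorder.frestrictLe n X

lemma cyl_eq (n : ℕ) (x : ℕ → Site d) :
    cyl n x = res n ⁻¹' {res n x} := by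
  ext X
  simp only [cyl, mem_ofPred_eq, mem_preimage, mem_singleton_iff]
  exact ⟨fun h => funext fun k => h k (Finset.mem_Iic.1 k.2),
    fun h k hk => congrFun h ⟨k, Finset.mem_Iic.2 hk⟩⟩

lemma measurableSet_cyl (n : ℕ) (x : ℕ → Site d) : MeasurableSet (cyl n x) := by
  rw [cyl_eq]
  exact Preorder.measurable_frestrictLe n (measurableSet_singleton _)

/-- A property of paths holds almost surely up to time `n` once it holds on every cylinder of
positive mass, there being only countably many cylinders. -/
lemma ae_cyl_pos (Q : Measure (PathSpace d)) (n : ℕ) : ∀ᵐ X ∂Q, Q (cyl n X) ≠ 0 := by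
  have h : {X | Q (cyl n X) = 0} ⊆ ⋃ z : {z : Finset.Iic n → Site d //
      Q (res n ⁻¹' {z}) = 0},
      res n ⁻¹' {z.1} := by
    intro X hX
    rw [mem_ofPred_eq, cyl_eq] at hX
    exact mem_iUnion.2 ⟨⟨_, hX⟩, rfl⟩
  rw [ae_iff]
  simp only [not_not]
  exact measure_mono_null h (measure_iUnion_null fun z => z.2)

lemma iSup_piLE : ⨆ n, (Filtration.piLE (X := fun _ : ℕ => Site d) n) = MeasurableSpace.pi := by
  apply le_antisymm (iSup_le fun n => Filtration.piLE.le n)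
  refine iSup_le fun n => le_trans ?_ (le_iSup _ n)
  rw [Filtration.piLE_eq_comap_frestrictLe]
  have : (fun b : PathSpace d => b n) =
      (fun u : Finset.Iic n → Site d => u ⟨n, by simp⟩) ∘ Preorder.frestrictLe n := rfl
  rw [this, ← MeasurableSpace.comap_comp]
  exact MeasurableSpace.comap_mono (measurable_pi_apply _).comap_le

/-- **Repeated trials.** `T n` is the event, determined by the path up to time `n`, that a trial
starts at time `n`. If each trial leads to `S` with conditional probability at least `c > 0`, then
almost surely infinitely many trials entail `S`: by Lévy's upward theorem the conditional
probabilities of `S` converge to the indicator of `S`. -/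
lemma trials (Q : Measure (PathSpace d)) [IsFiniteMeasure Q] (T : ℕ → Set (PathSpace d))
    (S : Set (PathSpace d)) (hS : MeasurableSet S) (c : ℝ) (hc : 0 < c)
    (h : ∀ n, ∀ x ∈ T n, c * Q.real (cyl n x) ≤ Q.real (cyl n x ∩ S)) :
    ∀ᵐ X ∂Q, (∃ᶠ n in atTop, X ∈ T n) → X ∈ S := by
  set f : PathSpace d → ℝ := S.indicator 1 with hf
  have hfm : StronglyMeasurable f := stronglyMeasurable_one.indicator hS
  have hfi : Integrable f Q := (integrable_const (1 : ℝ)).indicator hS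
  have key : ∀ᵐ X ∂Q, ∀ n, X ∈ T n → c ≤ (Q[f | Filtration.piLE n]) X := by
    rw [ae_all_iff]
    intro n
    filter_upwards [ae_cyl_pos Q n] with X hX hT
    have hcm : MeasurableSet[Filtration.piLE (X := fun _ : ℕ => Site d) n] (cyl n X) := by
      rw [Filtration.piLE_eq_comap_frestrictLe]
      exact ⟨{res n X}, measurableSet_singleton _, (cyl_eq n X).symm⟩
    have h1 := setIntegral_condExp (Filtration.piLE.le n) hfi hcm
    have hconst : ∀ Y ∈ cyl n X, (Q[f | Filtration.piLE n]) Y = (Q[f | Filtration.piLE n]) X := by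
      intro Y hY
      apply (stronglyMeasurable_condExp (m := Filtration.piLE n)
        (f := f) (μ := Q)).dependsOn_of_piLE
      intro k hk
      exact hY k hk
    rw [setIntegral_congr_fun (measurableSet_cyl n X) hconst, setIntegral_const, hf,
      setIntegral_indicator hS] at h1
    simp only [Pi.one_apply, setIntegral_const, smul_eq_mul, mul_one] at h1
    have h2 := h n X hT
    have h3 : 0 < Q.real (cyl n X) :=
      ENNReal.toReal_pos hX (measure_ne_top _ _)
    nlinarith
  have hlim := hfi.tendsto_ae_condExp (ℱ := Filtration.piLE) (by rwa [iSup_piLE])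
  filter_upwards [key, hlim] with X h1 h2 h3
  by_contra hX
  have h4 : f X = 0 := by simp [hf, hX]
  rw [h4] at h2
  exact h3 ((h2.eventually (gt_mem_nhds hc)).mono fun n hn hT => absurd (h1 n hT) (not_le.2 hn))

/-- The path `x` up to time `n`, followed by the path `y` translated to start at `x n`; the
definition is meant for `y 0 = 0`. -/
def concat (n : ℕ) (x y : ℕ → Site d) (k : ℕ) : Site d :=
  if k ≤ n then x k else x n + y (k - n)

lemma concat_of_le {n k : ℕ} (x y : ℕ → Site d) (h : k ≤ n) : concat n x y k = x k := if_pos h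

lemma concat_add (n k : ℕ) (x y : ℕ → Site d) (hy : y 0 = 0) :
    concat n x y (n + k) = x n + y k := by
  unfold concat
  split_ifs with h
  · obtain rfl : k = 0 := by omega
    simp [hy]
  · simp

/-- The path after time `n`, recentred at its position at time `n`. -/
def shiftPath (n : ℕ) (X : PathSpace d) : PathSpace d := fun k => X (n + k) - X n

lemma measurable_shiftPath (n : ℕ) : Measurable (shiftPath (d := d) n) :=
  measurable_pi_lambda _ fun k => (measurable_pi_apply (n + k)).sub (measurable_pi_apply n)

lemma cyl_inter_shift (n m : ℕ) (x y : ℕ → Site d) (hy : y 0 = 0) :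
    cyl n x ∩ shiftPath n ⁻¹' cyl m y = cyl (n + m) (concat n x y) := by
  ext X
  simp only [cyl, shiftPath, mem_inter_iff, mem_ofPred_eq, mem_preimage]
  constructor
  · rintro ⟨h1, h2⟩ k hk
    rcases le_total k n with h | h
    · rw [concat_of_le _ _ h, h1 k h]
    · obtain ⟨j, rfl⟩ := Nat.exists_eq_add_of_le h
      rw [concat_add _ _ _ _ hy, ← h2 j (by omega), h1 n le_rfl]
      abel
  · intro h
    have h1 : ∀ k ≤ n, X k = x k := fun k hk => by
      rw [h k (by omega), concat_of_le _ _ hk]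
    refine ⟨h1, fun k hk => ?_⟩
    rw [h (n + k) (by omega), concat_add _ _ _ _ hy, h1 n le_rfl]
    abel

/-- The event that the path stays in `H` at all times. -/
def stay (H : Set (Site d)) : Set (PathSpace d) := {X | ∀ k, X k ∈ H}

lemma measurableSet_stay (H : Set (Site d)) : MeasurableSet (stay H) := by
  have : stay H = ⋂ k, {X : PathSpace d | X k ∈ H} := by ext; simp [stay]
  rw [this]
  exact MeasurableSet.iInter fun k => measurableSet_eval k H

/-- An inequality between two measures on the cylinders inside `H` passes to the event of staying
in `H` forever. -/
lemma stay_le_of_cyl (α β : Measure (PathSpace d)) [IsFiniteMeasure α] [IsFiniteMeasure β]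
    (H : Set (Site d)) (c : ℝ)
    (h : ∀ m (y : ℕ → Site d), (∀ k ≤ m, y k ∈ H) → c * α.real (cyl m y) ≤ β.real (cyl m y)) :
    c * α.real (stay H) ≤ β.real (stay H) := by
  set D : ℕ → Set (PathSpace d) := fun m => {X | ∀ k ≤ m, X k ∈ H} with hD
  have hstay : stay H = ⋂ m, D m := by
    ext X
    simp only [stay, hD, mem_ofPred_eq, mem_iInter]
    exact ⟨fun h m k _ => h k, fun h k => h k k le_rfl⟩
  have hDm : ∀ m, MeasurableSet (D m) := fun m => by
    have : D m = ⋂ k, ⋂ (_ : k ≤ m), {X : PathSpace d | X k ∈ H} := by ext; simp [hD]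
    rw [this]
    exact MeasurableSet.iInter fun k => MeasurableSet.iInter fun _ => measurableSet_eval k H
  have hanti : Antitone D := fun m m' hmm X hX k hk => hX k (hk.trans hmm)
  have hlim : ∀ (γ : Measure (PathSpace d)) [IsFiniteMeasure γ],
      Tendsto (fun m => γ.real (D m)) atTop (𝓝 (γ.real (stay H))) := by
    intro γ _
    rw [hstay]
    exact (ENNReal.tendsto_toReal (measure_ne_top _ _)).comp
      (tendsto_measure_iInter_atTop (fun m => (hDm m).nullMeasurableSet) hanti
        ⟨0, measure_ne_top _ _⟩)
  refine le_of_tendsto_of_tendsto' ((hlim α).const_mul c) (hlim β) fun m => ?_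
  -- decompose `D m` into the countably many cylinders of length `m` inside `H`
  set Z := {z : Finset.Iic m → Site d // ∀ k, z k ∈ H}
  have hdec : D m = ⋃ z : Z, res m ⁻¹' {z.1} := by
    ext X
    simp only [hD, mem_ofPred_eq, mem_iUnion, mem_preimage, mem_singleton_iff]
    constructor
    · intro hX
      exact ⟨⟨Preorder.frestrictLe m X, fun k => hX k (Finset.mem_Iic.1 k.2)⟩, rfl⟩
    · rintro ⟨z, hz⟩ k hk
      have := z.2 ⟨k, Finset.mem_Iic.2 hk⟩
      rwa [← hz] at this
  have hsum : ∀ (γ : Measure (PathSpace d)) [IsFiniteMeasure γ], HasSum (fun z : Z =>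
      γ.real (res m ⁻¹' {z.1})) (γ.real (D m)) := by
    intro γ _
    rw [hdec]
    have hU := measure_iUnion (μ := γ) (f := fun z : Z => res m ⁻¹' {z.1})
      (fun z z' hzz => Disjoint.preimage _ (by simpa using fun hh => hzz (Subtype.ext hh)))
      (fun z => Preorder.measurable_frestrictLe m (measurableSet_singleton _))
    rw [measureReal_def, hU, ENNReal.tsum_toReal_eq fun z => measure_ne_top _ _]
    exact ENNReal.hasSum_toReal (by rw [← hU]; exact measure_ne_top _ _)
  refine hasSum_le (fun z => ?_) ((hsum α).mul_left c) (hsum β)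
  set y : ℕ → Site d := fun k => if hk : k ∈ Finset.Iic m then z.1 ⟨k, hk⟩ else 0
  have hy : cyl m y = res m ⁻¹' {z.1} := by
    rw [cyl_eq]
    have : res m y = z.1 := by
      funext k
      change y k = z.1 k
      simp only [y, dif_pos k.2]
    rw [this]
  rw [← hy]
  refine h m y fun k hk => ?_
  simpa [y, hk] using z.2 ⟨k, Finset.mem_Iic.2 hk⟩

/-! ### Path weights in an i.i.d. environment -/

lemma measurable_prob (z : Site d) : Measurable fun γ : EnvDist d => γ.prob z :=
  (measurable_pi_apply z).comp (comap_measurable EnvDist.prob)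

lemma prob_le_one (γ : EnvDist d) (z : Site d) : γ.prob z ≤ 1 := by
  by_cases hz : γ.prob z = 0
  · rw [hz]; exact zero_le_one
  · obtain ⟨i, rfl⟩ := γ.support z hz
    rw [← γ.total]
    exact Finset.single_le_sum (f := fun i => γ.prob (stepVec d i)) (fun j _ => γ.nonneg _)
      (Finset.mem_univ i)

lemma measurable_pathWeight (n : ℕ) (x : ℕ → Site d) :
    Measurable fun ω : EnvOmega d => pathWeight ω n x :=
  Finset.measurable_prod _ fun k _ => (measurable_prob _).comp (measurable_pi_apply (x k))

lemma pathWeight_nonneg (ω : EnvOmega d) (n : ℕ) (x : ℕ → Site d) : 0 ≤ pathWeight ω n x :=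
  Finset.prod_nonneg fun _ _ => (ω _).nonneg _

lemma pathWeight_le_one (ω : EnvOmega d) (n : ℕ) (x : ℕ → Site d) : pathWeight ω n x ≤ 1 :=
  Finset.prod_le_one (fun _ _ => (ω _).nonneg _) fun _ _ => prob_le_one _ _

lemma integrable_pathWeight (ν : Measure (EnvOmega d)) [IsFiniteMeasure ν] (n : ℕ)
    (x : ℕ → Site d) : Integrable (fun ω => pathWeight ω n x) ν :=
  Integrable.of_bound (measurable_pathWeight n x).aestronglyMeasurable 1
    (.of_forall fun ω => by
      rw [Real.norm_of_nonneg (pathWeight_nonneg _ _ _)]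
      exact pathWeight_le_one _ _ _)

lemma pathWeight_concat (ω : EnvOmega d) (n m : ℕ) (x y : ℕ → Site d) (hy : y 0 = 0) :
    pathWeight ω (n + m) (concat n x y) =
      pathWeight ω n x * pathWeight (fun z => ω (x n + z)) m y := by
  unfold pathWeight
  rw [Finset.prod_range_add]
  congr 1
  · refine Finset.prod_congr rfl fun k hk => ?_
    have := Finset.mem_range.1 hk
    rw [concat_of_le _ _ (by omega), concat_of_le _ _ (by omega)]
  · refine Finset.prod_congr rfl fun k _ => ?_
    rw [add_assoc, concat_add _ _ _ _ hy, concat_add _ _ _ _ hy, add_sub_add_left_eq_sub]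

/-- The annealed weight of a path. -/
def ann (ν : Measure (EnvOmega d)) (n : ℕ) (x : ℕ → Site d) : ℝ := ∫ ω, pathWeight ω n x ∂ν

lemma ann_nonneg (ν : Measure (EnvOmega d)) (n : ℕ) (x : ℕ → Site d) : 0 ≤ ann ν n x :=
  integral_nonneg fun _ => pathWeight_nonneg _ _ _

section IID

variable {μ : Measure (EnvDist d)} {ν : Measure (EnvOmega d)}

lemma eq_infinitePi (h : IsIIDEnv μ ν) :
    have := h.1; ν = Measure.infinitePi fun _ : Site d => μ := by
  have := h.1
  exact Measure.eq_infinitePi _ fun s t ht => h.2.2 s t fun x _ => ht x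

lemma map_translate (h : IsIIDEnv μ ν) (a : Site d) : ν.map (fun ω z => ω (a + z)) = ν := by
  have := h.1
  rw [eq_infinitePi h]
  exact Measure.map_infinitePi_infinitePi_of_inj (add_right_injective a)

lemma measurable_translate (a : Site d) : Measurable fun (ω : EnvOmega d) z => ω (a + z) :=
  measurable_pi_lambda _ fun z => measurable_pi_apply (a + z)

lemma integral_translate (h : IsIIDEnv μ ν) (a : Site d) (m : ℕ) (y : ℕ → Site d) :
    ∫ ω, pathWeight (fun z => ω (a + z)) m y ∂ν = ann ν m y := by
  conv_rhs => rw [ann, ← map_translate h a]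
  rw [integral_map (measurable_translate a).aemeasurable
    (measurable_pathWeight m y).aestronglyMeasurable]

lemma iIndepFun_env (h : IsIIDEnv μ ν) : iIndepFun (fun x (ω : EnvOmega d) => ω x) ν := by
  have := h.1
  rw [eq_infinitePi h]
  exact iIndepFun_infinitePi (X := fun _ γ => γ) fun _ => measurable_id

/-- The weight of a path whose departure sites lie in `I`, as a function of the environment
in `I`. -/
lemma pathWeight_factor (I : Finset (Site d)) (n : ℕ) (x : ℕ → Site d) (hx : ∀ k < n, x k ∈ I) :
    ∃ φ : (I → EnvDist d) → ℝ, Measurable φ ∧ ∀ ω, pathWeight ω n x = φ fun i => ω i := by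
  refine ⟨fun u => ∏ k : Fin n, (u ⟨x k, hx k k.2⟩).prob (x (k + 1) - x k),
    Finset.measurable_prod _ fun k _ => (measurable_prob _).comp (measurable_pi_apply _),
    fun ω => ?_⟩
  rw [pathWeight, Finset.prod_range]

/-- Annealed weights are multiplicative when the second path uses the environment only at sites
from which the first path has not departed. -/
lemma ann_concat (h : IsIIDEnv μ ν) (n m : ℕ) (x y : ℕ → Site d) (hy : y 0 = 0)
    (hxy : ∀ j < n, ∀ k < m, x j ≠ x n + y k) :
    ann ν (n + m) (concat n x y) = ann ν n x * ann ν m y := by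
  set I := (Finset.range n).image x
  set J := (Finset.range m).image fun k => x n + y k
  have hIJ : Disjoint I J := by
    simp only [I, J, Finset.disjoint_left, Finset.mem_image, Finset.mem_range]
    rintro _ ⟨j, hj, rfl⟩ ⟨k, hk, hjk⟩
    exact hxy j hj k hk hjk.symm
  have hind := (iIndepFun_env h).indepFun_finset I J hIJ fun i => measurable_pi_apply i
  obtain ⟨φ, hφ, hφx⟩ := pathWeight_factor I n x fun k hk =>
    Finset.mem_image_of_mem _ (Finset.mem_range.2 hk)
  obtain ⟨ψ, hψ, hψy⟩ := pathWeight_factor J m (fun k => x n + y k) fun k hk =>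
    Finset.mem_image.2 ⟨k, Finset.mem_range.2 hk, rfl⟩
  have htr : ∀ ω : EnvOmega d, pathWeight (fun z => ω (x n + z)) m y =
      pathWeight ω m fun k => x n + y k := fun ω => by
    simp only [pathWeight, add_sub_add_left_eq_sub]
  rw [← integral_translate h (x n) m y]
  simp only [ann, pathWeight_concat _ _ _ _ _ hy, htr]
  simp only [hφx, hψy]
  have hres : ∀ s : Finset (Site d), Measurable fun (ω : EnvOmega d) (i : s) => ω i :=
    fun s => measurable_pi_lambda _ fun i => measurable_pi_apply i.1
  exact (hind.comp hφ hψ).integral_fun_mul_eq_mul_integral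
    (hφ.comp (hres I)).aestronglyMeasurable (hψ.comp (hres J)).aestronglyMeasurable

lemma ann_concat_le (h : IsIIDEnv μ ν) (n m : ℕ) (x y : ℕ → Site d) (hy : y 0 = 0) :
    ann ν (n + m) (concat n x y) ≤ ann ν m y := by
  have := h.2.1
  rw [← integral_translate h (x n) m y, ann]
  refine integral_mono (integrable_pathWeight ν _ _) ?_ fun ω => ?_
  · exact (integrable_pathWeight ν m fun k => x n + y k).congr (.of_forall fun ω => by
      simp only [pathWeight, add_sub_add_left_eq_sub])
  · simp only [pathWeight_concat _ _ _ _ _ hy]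
    exact mul_le_of_le_one_left (pathWeight_nonneg _ _ _) (pathWeight_le_one _ _ _)

/-- The annealed probability of the step `z` at a site not visited before. -/
def stepProb (μ : Measure (EnvDist d)) (z : Site d) : ℝ := ∫ γ, γ.prob z ∂μ

lemma integral_prob (h : IsIIDEnv μ ν) (x z : Site d) : ∫ ω, (ω x).prob z ∂ν = stepProb μ z := by
  have := h.1
  have : μ = ν.map fun ω => ω x := by
    rw [eq_infinitePi h]
    exact (Measure.infinitePi_map_eval (fun _ : Site d => μ) x).symm
  rw [stepProb, this, integral_map (measurable_pi_apply x).aemeasurable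
    (measurable_prob z).aestronglyMeasurable]

lemma ann_one (h : IsIIDEnv μ ν) (x : ℕ → Site d) : ann ν 1 x = stepProb μ (x 1 - x 0) := by
  simp [ann, pathWeight, integral_prob h]

lemma stepProb_pos [IsProbabilityMeasure μ] (z : Site d) (hz : 0 < μ {γ | 0 < γ.prob z}) :
    0 < stepProb μ z := by
  have hi : Integrable (fun γ : EnvDist d => γ.prob z) μ :=
    Integrable.of_bound (measurable_prob z).aestronglyMeasurable 1 (.of_forall fun γ => by
      rw [Real.norm_of_nonneg (γ.nonneg z)]; exact prob_le_one γ z)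
  rw [stepProb, integral_pos_iff_support_of_nonneg (fun γ => γ.nonneg z) hi]
  refine hz.trans_le (measure_mono fun γ hγ => ?_)
  exact ne_of_gt hγ

/-- The weight of a straight path in the direction `e ≠ 0` is a power of the one-step weight. -/
lemma ann_line (h : IsIIDEnv μ ν) (e : Site d) (he : e ≠ 0) (K : ℕ) :
    ann ν K (fun k : ℕ => (k : ℤ) • e) = stepProb μ e ^ K := by
  have := h.2.1
  induction K with
  | zero => simp [ann, pathWeight]
  | succ K ih =>
    have hc : concat K (fun k : ℕ => (k : ℤ) • e) (fun k : ℕ => (k : ℤ) • e) =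
        fun k : ℕ => (k : ℤ) • e := by
      funext k
      rcases le_total k K with hk | hk
      · exact concat_of_le _ _ hk
      · obtain ⟨j, rfl⟩ := Nat.exists_eq_add_of_le hk
        rw [concat_add _ _ _ _ (by simp), ← add_smul]
        push_cast
        rfl
    rw [← hc, ann_concat h K 1 _ _ (by simp), ih, ann_one h]
    · simp [pow_succ]
    · intro j hj k hk heq
      obtain rfl : k = 0 := by omega
      rw [← add_smul] at heq
      have := smul_left_injective ℤ he heq
      simp only [Nat.cast_zero, add_zero, Nat.cast_inj] at this
      omega

end IID

/-! ### The annealed path law -/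

section Walk

variable {μ : Measure (EnvDist d)} {P : Measure (RWSpace d)}

/-- The annealed law of the path. -/
abbrev pathLaw (P : Measure (RWSpace d)) : Measure (PathSpace d) := P.map Prod.snd

/-- The straight path from the origin with all steps equal to `e`. -/
def line (e : Site d) (k : ℕ) : Site d := (k : ℤ) • e

lemma line_zero (e : Site d) : line e 0 = 0 := by simp [line]

lemma line_one (e : Site d) : line e 1 = e := by simp [line]

lemma pathLaw_cyl (hP : IsRWRE μ P) (n : ℕ) (x : ℕ → Site d) :
    (pathLaw P).real (cyl n x) = if x 0 = 0 then ann (P.map Prod.fst) n x else 0 := by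
  have h := hP.2.2 n x univ MeasurableSet.univ
  rw [measureReal_def, Measure.map_apply measurable_snd (measurableSet_cyl n x)]
  simp only [mem_univ, true_and, Measure.restrict_univ] at h
  rw [ite_mul, one_mul, zero_mul] at h
  exact h

lemma pathLaw_cyl_concat (hP : IsRWRE μ P) (n m : ℕ) (x y : ℕ → Site d) (hy : y 0 = 0)
    (hxy : ∀ j < n, ∀ k < m, x j ≠ x n + y k) :
    (pathLaw P).real (cyl (n + m) (concat n x y)) =
      (pathLaw P).real (cyl n x) * ann (P.map Prod.fst) m y := by
  rw [pathLaw_cyl hP, pathLaw_cyl hP, concat_of_le _ _ (Nat.zero_le n),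
    ann_concat hP.2.1 n m x y hy hxy]
  split_ifs <;> simp

lemma cyl_concat_subset (n m : ℕ) (x y : ℕ → Site d) :
    cyl (n + m) (concat n x y) ⊆ cyl n x := fun X hX k hk => by
  rw [hX k (by omega), concat_of_le _ _ hk]

/-! ### The walk visits infinitely many sites -/

/-- A site visited infinitely often passes this property on to each of its successors. -/
lemma frequently_step (hP : IsRWRE μ P) (y z : Site d) :
    ∀ᵐ q ∂P, 0 < (q.1 y).prob (z - y) → (∃ᶠ n in atTop, q.2 n = y) →
      ∃ᶠ n in atTop, q.2 n = z := by
  have := hP.1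
  -- restrict to environments in which the step has probability at least `1 / (j + 1)`
  have key : ∀ j N : ℕ, ∀ᵐ q ∂P, 1 / ((j : ℝ) + 1) ≤ (q.1 y).prob (z - y) →
      (∃ᶠ n in atTop, q.2 n = y) → ∃ n ≥ N, q.2 n = z := by
    intro j N
    set A : Set (EnvOmega d) := {ω | 1 / ((j : ℝ) + 1) ≤ (ω y).prob (z - y)} with hAdef
    have hA : MeasurableSet A :=
      measurableSet_le measurable_const ((measurable_prob _).comp (measurable_pi_apply y))
    have hA' : MeasurableSet (Prod.fst ⁻¹' A : Set (RWSpace d)) := measurable_fst hA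
    set Q := (P.restrict (Prod.fst ⁻¹' A)).map Prod.snd with hQ
    have hcyl : ∀ n (x : ℕ → Site d), Q.real (cyl n x) =
        (if x 0 = 0 then (1 : ℝ) else 0) * ∫ ω in A, pathWeight ω n x ∂(P.map Prod.fst) := by
      intro n x
      rw [← hP.2.2 n x A hA, measureReal_def, hQ,
        Measure.map_apply measurable_snd (measurableSet_cyl n x),
        Measure.restrict_apply (measurable_snd (measurableSet_cyl n x)), inter_comm]
      rfl
    have hS : MeasurableSet {X : PathSpace d | ∃ n ≥ N, X n = z} := by
      have : {X : PathSpace d | ∃ n ≥ N, X n = z} =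
          ⋃ n, ⋃ (_ : n ≥ N), {X : PathSpace d | X n ∈ ({z} : Set (Site d))} := by
        ext; simp
      rw [this]
      exact MeasurableSet.iUnion fun n => MeasurableSet.iUnion fun _ => measurableSet_eval n _
    have htr := trials Q (fun n => {X | N ≤ n ∧ X n = y}) {X | ∃ n ≥ N, X n = z} hS
      (1 / ((j : ℝ) + 1)) (by positivity) ?_
    · have h2 := ae_of_ae_map measurable_snd.aemeasurable htr
      rw [ae_restrict_iff' hA'] at h2
      filter_upwards [h2] with q hq h3 h4
      exact hq h3 (((eventually_ge_atTop N).and_frequently h4).mono fun n h => h)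
    · rintro n x ⟨hn, hxn⟩
      have hsub : cyl (n + 1) (concat n x (line (z - y))) ⊆
          cyl n x ∩ {X | ∃ n ≥ N, X n = z} := fun X hX =>
        ⟨cyl_concat_subset _ _ _ _ hX, n + 1, by omega, by
          rw [hX (n + 1) le_rfl, concat_add _ _ _ _ (line_zero _), line_one, hxn]; abel⟩
      refine le_trans ?_ (measureReal_mono hsub)
      rw [hcyl, hcyl, concat_of_le _ _ (Nat.zero_le n), mul_left_comm, ← integral_const_mul]
      refine mul_le_mul_of_nonneg_left ?_ (by split_ifs <;> simp)
      have : IsFiniteMeasure ((P.map Prod.fst).restrict A) := by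
        have := hP.2.1.2.1
        infer_instance
      refine setIntegral_mono_on ((integrable_pathWeight _ _ _).const_mul _)
        (integrable_pathWeight _ _ _) hA fun ω hω => ?_
      rw [pathWeight_concat _ _ _ _ _ (line_zero _), mul_comm]
      refine mul_le_mul_of_nonneg_left ?_ (pathWeight_nonneg _ _ _)
      have : pathWeight (fun u => ω (x n + u)) 1 (line (z - y)) = (ω y).prob (z - y) := by
        simp [pathWeight, line_one, line_zero, hxn]
      rw [this]
      exact hω
  filter_upwards [ae_all_iff.2 fun j => ae_all_iff.2 (key j)] with q hq hpos hfr
  obtain ⟨j, hj⟩ := exists_nat_one_div_lt hpos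
  exact frequently_atTop.2 fun N => hq j N hj.le hfr

lemma measurableSet_reaches (a b : Site d) : MeasurableSet {ω : EnvOmega d | Reaches ω a b} := by
  -- reachability in exactly `n` steps
  let R : ℕ → Site d → Set (EnvOmega d) := fun n => Nat.rec (fun c => {_ω | a = c})
    (fun _ S c => ⋃ b', S b' ∩ {ω | 0 < (ω b').prob (c - b')}) n
  have hR : ∀ n c, MeasurableSet (R n c) := by
    intro n
    induction n with
    | zero => exact fun c => MeasurableSet.const _
    | succ n ih =>
      exact fun c => MeasurableSet.iUnion fun b' => (ih b').inter
        (measurableSet_lt measurable_const ((measurable_prob _).comp (measurable_pi_apply b')))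
  have : {ω : EnvOmega d | Reaches ω a b} = ⋃ n, R n b := by
    ext ω
    simp only [mem_ofPred_eq, mem_iUnion]
    constructor
    · intro h
      induction h with
      | refl => exact ⟨0, rfl⟩
      | @tail b' c _ h2 ih =>
        obtain ⟨n, hn⟩ := ih
        exact ⟨n + 1, mem_iUnion.2 ⟨b', hn, h2⟩⟩
    · rintro ⟨n, hn⟩
      induction n generalizing b with
      | zero => obtain rfl : a = b := hn; exact .refl
      | succ n ih =>
        obtain ⟨b', h1, h2⟩ := mem_iUnion.1 hn
        exact (ih b' h1).tail h2
  rw [this]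
  exact MeasurableSet.iUnion fun n => hR n b

lemma measurableSet_infinite_cluster (a : Site d) :
    MeasurableSet {ω : EnvOmega d | (clusterC ω a).Infinite} := by
  have : {ω : EnvOmega d | (clusterC ω a).Infinite} =
      ⋂ F : Finset (Site d), ⋃ b : Site d, ⋃ (_ : b ∉ F), {ω | Reaches ω a b} := by
    ext ω
    simp only [mem_ofPred_eq, mem_iInter, mem_iUnion]
    constructor
    · intro h F
      obtain ⟨b, hb, hbF⟩ := h.exists_notMem_finset F
      exact ⟨b, hbF, hb⟩
    · intro h hfin
      obtain ⟨b, hbF, hb⟩ := h hfin.toFinset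
      exact hbF (hfin.mem_toFinset.2 hb)
  rw [this]
  exact MeasurableSet.iInter fun F => MeasurableSet.iUnion fun b => MeasurableSet.iUnion fun _ =>
    measurableSet_reaches a b

/-- By translation invariance, if the cluster of the origin is almost surely infinite, then so are
all clusters at once. -/
lemma ae_infinite_cluster {ν : Measure (EnvOmega d)} (h : IsIIDEnv μ ν)
    (hθ : ν {ω : EnvOmega d | (clusterC ω 0).Infinite} = 1) :
    ∀ᵐ ω ∂ν, ∀ y, (clusterC ω y).Infinite := by
  have := h.2.1
  rw [ae_all_iff]
  intro y
  have h0 : ∀ᵐ ω ∂ν, (clusterC ω 0).Infinite := by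
    rw [← prob_compl_eq_zero_iff (measurableSet_infinite_cluster 0)] at hθ
    exact hθ
  rw [← map_translate h y] at h0
  filter_upwards [ae_of_ae_map (measurable_translate y).aemeasurable h0] with ω hω
  refine (hω.image (add_right_injective y).injOn).mono ?_
  rintro _ ⟨b, hb, rfl⟩
  have hb' : Reaches (fun z => ω (y + z)) 0 b := hb
  change Reaches ω y (y + b)
  induction hb' with
  | refl => rw [add_zero]; exact .refl
  | tail h1 h2 ih =>
    exact (ih h1).tail (by simpa only [add_sub_add_left_eq_sub] using h2)

/-- If the range were finite, some site would be visited infinitely often, and then so would be its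
whole infinite cluster. -/
lemma ae_infinite_range (hP : IsRWRE μ P)
    (hθ : (P.map Prod.fst) {ω : EnvOmega d | (clusterC ω 0).Infinite} = 1) :
    ∀ᵐ q ∂P, (range q.2).Infinite := by
  have h1 := ae_of_ae_map measurable_fst.aemeasurable (ae_infinite_cluster hP.2.1 hθ)
  have h2 := ae_all_iff.2 fun y => ae_all_iff.2 fun z => frequently_step hP y z
  filter_upwards [h1, h2] with q hC hstep hfin
  obtain ⟨y, hy⟩ : ∃ y, ∃ᶠ n in atTop, q.2 n = y := by
    by_contra! hno
    have := (eventually_all_finite hfin).2 fun y _ => hno y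
    obtain ⟨n, hn⟩ := this.exists
    exact hn _ (mem_range_self n) rfl
  refine hC y (hfin.subset fun z hz => ?_)
  have : ∃ᶠ n in atTop, q.2 n = z := by
    induction hz with
    | refl => exact hy
    | tail _ h ih => exact hstep _ _ h ih
  obtain ⟨n, hn⟩ := this.exists
  exact ⟨n, hn⟩

/-! ### The walk leaves every slab -/

lemma dotR_add (x y : Site d) (v : Fin d → ℝ) : dotR (x + y) v = dotR x v + dotR y v := by
  simp [dotR, add_mul, Finset.sum_add_distrib]

lemma dotR_sub (x y : Site d) (v : Fin d → ℝ) : dotR (x - y) v = dotR x v - dotR y v := by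
  simp [dotR, sub_mul, Finset.sum_sub_distrib]

lemma dotR_zsmul (j : ℤ) (x : Site d) (v : Fin d → ℝ) : dotR (j • x) v = j * dotR x v := by
  simp [dotR, Finset.mul_sum, mul_assoc]

lemma dotR_zero (v : Fin d → ℝ) : dotR (0 : Site d) v = 0 := by simp [dotR]

/-- The sites of a slab on finitely many lines transversal to it form a finite set.
Hence a path in the slab with infinite range finds new lines infinitely often. -/
lemma frequently_new_line (X : PathSpace d) (v : Fin d → ℝ) (e : Site d) (he : dotR e v ≠ 0)
    (N : ℝ) (hX : ∀ n, |dotR (X n) v| ≤ N) (hinf : (range X).Infinite) :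
    ∃ᶠ n in atTop, ∀ m < n, ∀ j : ℤ, X m ≠ X n + j • e := by
  by_contra hno
  rw [not_frequently] at hno
  obtain ⟨n₀, hn₀⟩ := eventually_atTop.1 hno
  have hline : ∀ n, ∃ m < n₀ + 1, ∃ j : ℤ, X n = X m + j • e := by
    intro n
    induction n using Nat.strong_induction_on with
    | _ n ih =>
      rcases lt_or_ge n (n₀ + 1) with h | h
      · exact ⟨n, h, 0, by simp⟩
      · have := hn₀ n (by omega)
        push Not at this
        obtain ⟨m, hm, j, hj⟩ := this
        obtain ⟨m', hm', j', hj'⟩ := ih m hm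
        refine ⟨m', hm', j' - j, ?_⟩
        rw [sub_smul, ← add_sub_assoc, ← hj', hj]
        abel
  obtain ⟨J, hJ⟩ := exists_nat_gt (2 * N / |dotR e v|)
  rw [div_lt_iff₀ (abs_pos.2 he)] at hJ
  refine hinf (((Set.finite_Iio (n₀ + 1)).prod (Set.finite_Icc (-(J : ℤ)) J)).image
    (fun p => X p.1 + p.2 • e) |>.subset ?_)
  rintro _ ⟨n, rfl⟩
  obtain ⟨m, hm, j, hj⟩ := hline n
  refine ⟨(m, j), ⟨hm, ?_⟩, hj.symm⟩
  have h1 : |(j : ℝ)| * |dotR e v| ≤ 2 * N := by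
    rw [← abs_mul, ← dotR_zsmul, show j • e = X n - X m by rw [hj]; abel, dotR_sub]
    exact (abs_sub _ _).trans (by linarith [hX n, hX m])
  have h2 : |(j : ℝ)| < J := lt_of_mul_lt_mul_right (h1.trans_lt hJ) (abs_nonneg _)
  have h3 : |j| < (J : ℤ) := by exact_mod_cast h2
  exact ⟨(abs_lt.1 h3).1.le, (abs_lt.1 h3).2.le⟩

/-- The walk almost surely leaves every slab `{|x · v| ≤ N}`: each new line in the direction `e`
allows `K` consecutive steps `e` in an unused environment, which lead out of the slab. -/
lemma ae_unbounded (hP : IsRWRE μ P) (hinf : ∀ᵐ q ∂P, (range q.2).Infinite)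
    (v : Fin d → ℝ) (e : Site d) (he : dotR e v ≠ 0) (hp : 0 < stepProb μ e) :
    ∀ᵐ q ∂P, ∀ N : ℕ, ∃ k, (N : ℝ) < |dotR (q.2 k) v| := by
  have := hP.1
  rw [ae_all_iff]
  intro N
  obtain ⟨K, hK⟩ := exists_nat_gt (2 * N / |dotR e v|)
  rw [div_lt_iff₀ (abs_pos.2 he)] at hK
  have hS : MeasurableSet {X : PathSpace d | ∃ k, (N : ℝ) < |dotR (X k) v|} := by
    have : {X : PathSpace d | ∃ k, (N : ℝ) < |dotR (X k) v|} =
        ⋃ k, {X : PathSpace d | X k ∈ {x : Site d | (N : ℝ) < |dotR x v|}} := by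
      ext; simp
    rw [this]
    exact MeasurableSet.iUnion fun k => measurableSet_eval k _
  have htr := trials (pathLaw P) (fun n => {X | ∀ m < n, ∀ j : ℤ, X m ≠ X n + j • e}) _ hS
    (stepProb μ e ^ K) (pow_pos hp K) ?_
  · filter_upwards [hinf, ae_of_ae_map measurable_snd.aemeasurable htr] with q h1 h2
    by_contra! hno
    obtain ⟨k, hk⟩ := h2 (frequently_new_line q.2 v e he N hno h1)
    exact not_lt.2 (hno k) hk
  · intro n x hx
    have hsub : cyl (n + K) (concat n x (line e)) ⊆
        cyl n x ∩ {X | ∃ k, (N : ℝ) < |dotR (X k) v|} := by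
      refine fun X hX => ⟨cyl_concat_subset _ _ _ _ hX, ?_⟩
      change ∃ k, (N : ℝ) < |dotR (X k) v|
      by_contra! hno
      have h1 := hno (n + K)
      rw [hX (n + K) le_rfl, concat_add _ _ _ _ (line_zero _), dotR_add, line, dotR_zsmul] at h1
      have h2 := hno n
      rw [hX n (by omega), concat_of_le _ _ le_rfl] at h2
      have h3 : |((K : ℤ) : ℝ) * dotR e v| ≤ 2 * N := by
        have := abs_sub (dotR (x n) v + ((K : ℤ) : ℝ) * dotR e v) (dotR (x n) v)
        rw [add_sub_cancel_left] at this
        linarith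
      rw [abs_mul, Int.cast_natCast, Nat.abs_cast] at h3
      linarith
    refine le_trans ?_ (measureReal_mono hsub)
    have he0 : e ≠ 0 := by rintro rfl; exact he (dotR_zero v)
    rw [pathLaw_cyl_concat hP n K x _ (line_zero _) fun j hj k _ => hx j hj k, mul_comm]
    exact mul_le_mul_of_nonneg_left (ann_line hP.2.1 e he0 K).ge measureReal_nonneg

/-! ### Staying above the starting level -/

/-- The half-space `{x : x · v ≥ -ε}`. -/
def half (v : Fin d → ℝ) (ε : ℝ) : Set (Site d) := {x | -ε ≤ dotR x v}

lemma real_map_restrict (Q : Measure (PathSpace d)) (n m : ℕ) (x y : ℕ → Site d) (hy : y 0 = 0) :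
    ((Q.restrict (cyl n x)).map (shiftPath n)).real (cyl m y) =
      Q.real (cyl (n + m) (concat n x y)) := by
  rw [measureReal_def, Measure.map_apply (measurable_shiftPath n) (measurableSet_cyl m y),
    Measure.restrict_apply (measurable_shiftPath n (measurableSet_cyl m y)), inter_comm,
    cyl_inter_shift _ _ _ _ hy, ← measureReal_def]

lemma real_map_restrict_stay (Q : Measure (PathSpace d)) (n : ℕ) (x : ℕ → Site d)
    (H : Set (Site d)) : ((Q.restrict (cyl n x)).map (shiftPath n)).real (stay H) =
      Q.real (cyl n x ∩ shiftPath n ⁻¹' stay H) := by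
  rw [measureReal_def, Measure.map_apply (measurable_shiftPath n) (measurableSet_stay H),
    Measure.restrict_apply (measurable_shiftPath n (measurableSet_stay H)), inter_comm,
    ← measureReal_def]

/-- After any initial segment, the probability of staying in `H` relative to the current position
is at most that from the start: the weight of the initial segment is at most one. -/
lemma shift_stay_le (hP : IsRWRE μ P) (H : Set (Site d)) (n : ℕ) (x : ℕ → Site d) :
    (pathLaw P).real (cyl n x ∩ shiftPath n ⁻¹' stay H) ≤ (pathLaw P).real (stay H) := by
  have := hP.1
  rw [← real_map_restrict_stay, ← one_mul (((pathLaw P).restrict _).map _ |>.real _)]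
  refine stay_le_of_cyl _ _ H 1 fun m y _ => ?_
  rw [one_mul]
  by_cases hy : y 0 = 0
  · rw [real_map_restrict _ _ _ _ _ hy, pathLaw_cyl hP, pathLaw_cyl hP, if_pos hy]
    split_ifs
    · exact ann_concat_le hP.2.1 n m x y hy
    · exact ann_nonneg _ _ _
  · have : shiftPath n ⁻¹' cyl m y = (∅ : Set (PathSpace d)) := by
      refine eq_empty_of_forall_notMem fun X hX => hy ?_
      rw [← hX 0 (Nat.zero_le m)]
      simp [shiftPath]
    rw [measureReal_def, Measure.map_apply (measurable_shiftPath n) (measurableSet_cyl m y), this]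
    simp

/-- If the walk has probability zero of staying above level `-ε` forever, it is almost surely not
bounded below: a time at which it is within `ε` of its infimum would start such a stay. -/
lemma ae_not_bddBelow (hP : IsRWRE μ P) (v : Fin d → ℝ) (ε : ℝ) (hε : 0 < ε)
    (h0 : (pathLaw P).real (stay (half v ε)) = 0) :
    ∀ᵐ q ∂P, ¬ BddBelow (range fun n => dotR (q.2 n) v) := by
  have := hP.1
  have key : ∀ᵐ X ∂(pathLaw P), ∀ n, ¬ shiftPath n X ∈ stay (half v ε) := by
    rw [ae_all_iff]
    intro n
    have hB : MeasurableSet (shiftPath n ⁻¹' stay (half v ε)) :=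
      measurable_shiftPath n (measurableSet_stay _)
    have := ae_cyl_pos ((pathLaw P).restrict (shiftPath n ⁻¹' stay (half v ε))) n
    rw [ae_restrict_iff' hB] at this
    filter_upwards [this] with X hX hXB
    apply hX hXB
    rw [Measure.restrict_apply (measurableSet_cyl n X)]
    have h1 := shift_stay_le hP (half v ε) n X
    rw [h0] at h1
    exact (measureReal_eq_zero_iff).1 (le_antisymm h1 measureReal_nonneg)
  filter_upwards [ae_of_ae_map measurable_snd.aemeasurable key] with q hq hbdd
  obtain ⟨_, ⟨n, rfl⟩, hn⟩ := exists_lt_of_csInf_lt (range_nonempty fun n => dotR (q.2 n) v)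
    (lt_add_of_pos_right _ hε)
  refine hq n fun k => ?_
  have := csInf_le hbdd (mem_range_self (n + k))
  simp only [half, mem_ofPred_eq, shiftPath, dotR_sub] at hn this ⊢
  linarith

/-- At a time when the walk reaches a strict maximum in the direction `v`, it takes a step `z` with
`z · v > ε` and then stays above its new level minus `ε`, with probability bounded below: this
part of the trajectory only uses sites not departed from before. -/
lemma record_stay (hP : IsRWRE μ P) (v : Fin d → ℝ) (ε : ℝ) (z : Site d)
    (hz : ε < dotR z v) (n : ℕ) (x : ℕ → Site d) (hx : ∀ m < n, dotR (x m) v < dotR (x n) v) :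
    stepProb μ z * (pathLaw P).real (stay (half v ε)) * (pathLaw P).real (cyl n x) ≤
      (pathLaw P).real (cyl (n + 1) (concat n x (line z)) ∩
        shiftPath (n + 1) ⁻¹' stay (half v ε)) := by
  have := hP.1
  set x' := concat n x (line z) with hx'
  have hx'n : x' (n + 1) = x n + z := by
    rw [hx', concat_add _ _ _ _ (line_zero _), line_one]
  rw [← real_map_restrict_stay, mul_right_comm]
  refine stay_le_of_cyl _ _ _ _ fun m y hy => ?_
  by_cases hy0 : y 0 = 0
  · rw [real_map_restrict _ _ _ _ _ hy0, pathLaw_cyl_concat hP _ _ _ _ hy0, hx',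
      pathLaw_cyl_concat hP _ _ _ _ (line_zero _), ann_one hP.2.1, pathLaw_cyl hP m, if_pos hy0,
      line_one, line_zero, sub_zero, mul_comm (stepProb μ z)]
    · intro j hj k hk heq
      obtain rfl : k = 0 := by omega
      rw [line_zero, add_zero] at heq
      exact (hx j hj).ne (by rw [heq])
    · intro j hj k hk heq
      have h1 := hy k hk.le
      have h2 := congrArg (fun u => dotR u v) heq
      simp only [hx'n, dotR_add, half, mem_ofPred_eq] at h1 h2
      have h3 : dotR (x' j) v ≤ dotR (x n) v := by
        rw [hx', concat_of_le _ _ (by omega)]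
        rcases (Nat.lt_succ_iff.1 hj).lt_or_eq with h | rfl
        · exact (hx j h).le
        · exact le_rfl
      linarith
  · rw [pathLaw_cyl hP m, if_neg hy0, mul_zero]
    exact measureReal_nonneg

/-- A sequence not bounded above exceeds all its previous values infinitely often, and does so
above any given level. -/
lemma frequently_record (u : ℕ → ℝ) (hu : ¬ BddAbove (range u)) (h : ℝ) :
    ∃ᶠ n in atTop, (∀ m < n, u m < u n) ∧ h ≤ u n := by
  rw [frequently_atTop]
  intro N
  have hex : ∃ n, max h (∑ k ∈ Finset.range (N + 1), |u k|) < u n := by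
    by_contra! hno
    exact hu ⟨_, by rintro _ ⟨n, rfl⟩; exact hno n⟩
  have hn := Nat.find_spec hex
  set n := Nat.find hex
  refine ⟨n, ?_, fun m hm => (not_lt.1 (Nat.find_min hex hm)).trans_lt hn,
    (le_max_left _ _).trans hn.le⟩
  by_contra! hlt
  have := Finset.single_le_sum (f := fun k => |u k|) (fun k _ => abs_nonneg _)
    (Finset.mem_range.2 (show n < N + 1 by omega))
  linarith [le_abs_self (u n), (le_max_right h (∑ k ∈ Finset.range (N + 1), |u k|))]

/-- If the walk stays above its starting level (up to `ε`) with positive probability, then almost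
surely it tends to infinity in the direction `v` as soon as it is unbounded above. -/
lemma ae_transient (hP : IsRWRE μ P) (v : Fin d → ℝ) (ε : ℝ) (z : Site d)
    (hz : ε < dotR z v) (hp : 0 < stepProb μ z)
    (hstay : 0 < (pathLaw P).real (stay (half v ε))) :
    ∀ᵐ q ∂P, ¬ BddAbove (range fun n => dotR (q.2 n) v) →
      Tendsto (fun n => dotR (q.2 n) v) atTop atTop := by
  have := hP.1
  have key : ∀ h : ℕ, ∀ᵐ X ∂(pathLaw P),
      (∃ᶠ n in atTop, X ∈ {X : PathSpace d |
        (∀ m < n, dotR (X m) v < dotR (X n) v) ∧ (h : ℝ) ≤ dotR (X n) v}) →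
      X ∈ {X : PathSpace d | ∃ n, ∀ m ≥ n, (h : ℝ) ≤ dotR (X m) v} := by
    intro h
    refine trials (pathLaw P) (fun n => {X : PathSpace d |
        (∀ m < n, dotR (X m) v < dotR (X n) v) ∧ (h : ℝ) ≤ dotR (X n) v}) _ ?_ _
        (mul_pos hp hstay) fun n x hx => ?_
    · have : {X : PathSpace d | ∃ n, ∀ m ≥ n, (h : ℝ) ≤ dotR (X m) v} =
          ⋃ n, ⋂ m, ⋂ (_ : m ≥ n), {X : PathSpace d | X m ∈ {u : Site d | (h : ℝ) ≤ dotR u v}} := by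
        ext; simp
      rw [this]
      exact MeasurableSet.iUnion fun n => MeasurableSet.iInter fun m =>
        MeasurableSet.iInter fun _ => measurableSet_eval m _
    · refine (record_stay hP v ε z hz n x hx.1).trans (measureReal_mono ?_)
      rintro X ⟨hX1, hX2⟩
      refine ⟨cyl_concat_subset _ _ _ _ hX1, n + 1, fun m hm => ?_⟩
      obtain ⟨k, rfl⟩ := Nat.exists_eq_add_of_le hm
      have h1 := hX2 k
      simp only [half, mem_ofPred_eq, shiftPath, dotR_sub] at h1
      rw [hX1 (n + 1) le_rfl, concat_add _ _ _ _ (line_zero _), line_one, dotR_add] at h1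
      linarith [hx.2]
  filter_upwards [ae_of_ae_map measurable_snd.aemeasurable (ae_all_iff.2 key)] with q hq hub
  rw [tendsto_atTop]
  intro b
  obtain ⟨h, hh⟩ := exists_nat_ge b
  obtain ⟨n, hn⟩ := hq h (frequently_record _ hub h)
  exact eventually_atTop.2 ⟨n, fun m hm => hh.trans (hn m hm)⟩

/-- If no step going up in the direction `v` has positive probability, the walk never goes up. -/
lemma ae_antitone (hP : IsRWRE μ P) (v : Fin d → ℝ)
    (hz : ∀ z, 0 < dotR z v → ¬ 0 < stepProb μ z) :
    ∀ᵐ q ∂P, Antitone fun n => dotR (q.2 n) v := by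
  have := hP.1
  have := hP.2.1.2.1
  have h1 := ae_all_iff.2 fun n => ae_cyl_pos (pathLaw P) n
  filter_upwards [ae_of_ae_map measurable_snd.aemeasurable h1] with q hq
  refine antitone_nat_of_succ_le fun n => ?_
  by_contra! hlt
  refine hq (n + 1) ((measureReal_eq_zero_iff).1 (le_antisymm ?_ measureReal_nonneg))
  rw [pathLaw_cyl hP]
  split_ifs
  · have hs : stepProb μ (q.2 (n + 1) - q.2 n) ≤ 0 :=
      not_lt.1 (hz _ (by rw [dotR_sub]; linarith))
    refine le_trans ?_ hs
    rw [← integral_prob hP.2.1 (q.2 n), ann]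
    refine integral_mono (integrable_pathWeight _ _ _) ?_ fun ω => ?_
    · refine Integrable.of_bound ((measurable_prob _).comp
        (measurable_pi_apply (q.2 n))).aestronglyMeasurable 1 (.of_forall fun ω => ?_)
      rw [Real.norm_of_nonneg ((ω _).nonneg _)]
      exact prob_le_one _ _
    · simp only [pathWeight, Finset.prod_range_succ]
      exact mul_le_of_le_one_left ((ω _).nonneg _) (pathWeight_le_one ω n q.2)
  · exact le_rfl

end Walk

/-! ### The dichotomy -/

lemma liminf_dichotomy (u : ℕ → ℝ) (h : BddBelow (range u) → Tendsto u atTop atTop) :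
    liminf (fun n => (u n : EReal)) atTop = ⊤ ∨ liminf (fun n => (u n : EReal)) atTop = ⊥ := by
  refine or_iff_not_imp_right.2 fun hbot => ?_
  obtain ⟨a, -, ha⟩ := EReal.lt_iff_exists_real_btwn.1 (bot_lt_iff_ne_bot.2 hbot)
  have hev : ∀ᶠ n in atTop, a ≤ u n :=
    (eventually_lt_of_lt_liminf ha).mono fun n hn => (EReal.coe_lt_coe_iff.1 hn).le
  have hb : BddBelow (range u) := by
    rw [← Nat.cofinite_eq_atTop] at hev
    have hfin : {n | ¬ a ≤ u n}.Finite := hev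
    obtain ⟨b, hb⟩ := (hfin.image u).bddBelow
    refine ⟨min a b, ?_⟩
    rintro _ ⟨n, rfl⟩
    by_cases hn : a ≤ u n
    · exact (min_le_left _ _).trans hn
    · exact (min_le_right _ _).trans (hb (mem_image_of_mem u hn))
  exact (EReal.tendsto_coe_nhds_top_iff.2 (h hb)).liminf_eq

/-- Almost surely, the walk tends to infinity in the direction `v` unless it is unbounded below. -/
lemma ae_tendsto_of_bddBelow {μ : Measure (EnvDist d)} {P : Measure (RWSpace d)}
    (hP : IsRWRE μ P) (v : Fin d → ℝ)
    (hunb : ∀ᵐ q ∂P, ∀ N : ℕ, ∃ k, (N : ℝ) < |dotR (q.2 k) v|) :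
    ∀ᵐ q ∂P, BddBelow (range fun n => dotR (q.2 n) v) →
      Tendsto (fun n => dotR (q.2 n) v) atTop atTop := by
  have hboth : ∀ᵐ q ∂P, BddBelow (range fun n => dotR (q.2 n) v) →
      ¬ BddAbove (range fun n => dotR (q.2 n) v) := by
    filter_upwards [hunb] with q hq ⟨a, ha⟩ ⟨b, hb⟩
    obtain ⟨N, hN⟩ := exists_nat_ge (max |a| |b|)
    obtain ⟨k, hk⟩ := hq N
    exact not_le.2 hk ((abs_le_max_abs_abs (ha (mem_range_self k)) (hb (mem_range_self k))).trans hN)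
  by_cases hz : ∃ z, 0 < dotR z v ∧ 0 < stepProb μ z
  · obtain ⟨z, hzv, hp⟩ := hz
    rcases (measureReal_nonneg (μ := pathLaw P) (s := stay (half v (dotR z v / 2)))).eq_or_lt
      with h0 | h0
    · filter_upwards [ae_not_bddBelow hP v _ (half_pos hzv) h0.symm] with q hq hb
      exact absurd hb hq
    · filter_upwards [ae_transient hP v _ z (half_lt_self hzv) hp h0, hboth] with q h1 h2 h3
      exact h1 (h2 h3)
  · push Not at hz
    filter_upwards [ae_antitone hP v fun z h => not_lt.2 (hz z h), hboth] with q h1 h2 h3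
    refine absurd ⟨dotR (q.2 0) v, ?_⟩ (h2 h3)
    rintro _ ⟨n, rfl⟩
    exact h1 (Nat.zero_le n)

end

end RWRE

/-- assume `θ₊ = 1` and condition (★) (`μ(e_i ∈ G_o) > 0` for all `i`).
Then for each unit vector `v`, `P`-a.s. `liminf X_n·v ∈ {-∞, +∞}`. -/
theorem stmt9 {d : ℕ} (hd : 2 ≤ d) (μ : Measure (EnvDist d))
    (P : Measure (RWSpace d)) (hP : IsRWRE μ P)
    (hθ : (P.map Prod.fst) {ω : EnvOmega d | (clusterC ω 0).Infinite} = 1)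
    (hstar : ∀ i : Fin d, 0 < μ {γ : EnvDist d | 0 < γ.prob (stepVec d (i, true))})
    (v : Fin d → ℝ) (hv : ∑ i, v i ^ 2 = 1) :
    P {q : RWSpace d |
        liminf (fun n => ((dotR (q.2 n) v : ℝ) : EReal)) atTop = ⊤ ∨
        liminf (fun n => ((dotR (q.2 n) v : ℝ) : EReal)) atTop = ⊥} = 1 := by
  have := hP.1
  have := hP.2.1.1
  obtain ⟨i, hi⟩ : ∃ i, v i ≠ 0 := by
    by_contra! h
    simp [h] at hv
  have he : dotR (stepVec d (i, true)) v ≠ 0 := by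
    simpa [dotR, stepVec, Pi.single_apply] using hi
  have hunb := RWRE.ae_unbounded hP (RWRE.ae_infinite_range hP hθ) v _ he
    (RWRE.stepProb_pos _ (hstar i))
  have h := (RWRE.ae_tendsto_of_bddBelow hP v hunb).mono fun q hq =>
    RWRE.liminf_dichotomy _ hq
  rw [measure_congr (eventuallyEq_univ.2 h), measure_univ]
end
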